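/- arXiv:2005.10849 — 7 statements merged into one kernel-verified Lean document; each statement's English description precedes it below -/
import Mathlib

section
/- Let t ≥ 1 be an integer, and let G be a finite connected graph of girth at least 4t+1 and minimum degree δ. Then c(G) > (δ−1)^t / (e·t), where e is Euler's number. -/
/-!
The game of cops and robbers on a (finite connected) simple graph `G`:
first the `k` cops choose starting vertices, then the robber chooses a starting
vertex (knowing the cops' positions); the players alternate turns (cops first),
each cop may stay or move to an adjacent vertex, and the robber may stay or move
to an adjacent vertex.  The cops win if at some moment a cop occupies the same
vertex as the robber.  The cop number is the least `k` for which the cops have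
a winning strategy.
-/

variable {V : Type*}

/-- A (positional) strategy for a team of `k` cops on the graph `G`: an initial
placement, and a move function which, given the current cop positions and the
robber's position, tells each cop to stay or move to an adjacent vertex. -/
structure CopStrategy (G : SimpleGraph V) (k : ℕ) where
  init : Fin k → V
  move : (Fin k → V) → V → (Fin k → V)
  valid : ∀ c r i, move c r i = c i ∨ G.Adj (c i) (move c r i)

/-- A (positional) strategy for the robber on the graph `G` against `k` cops:
an initial placement depending on the cops' initial positions, and a move
function which, given the current cop positions and the robber's position,
makes the robber stay or move to an adjacent vertex. -/
structure RobberStrategy (G : SimpleGraph V) (k : ℕ) where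
  init : (Fin k → V) → V
  move : (Fin k → V) → V → V
  valid : ∀ c r, move c r = r ∨ G.Adj r (move c r)

/-- The sequence of game positions (cop positions, robber position) produced by a
cop strategy and a robber strategy; `play CS RS n` is the position after `n`
full rounds (a round being a cop move followed by a robber move). -/
def play {G : SimpleGraph V} {k : ℕ} (CS : CopStrategy G k) (RS : RobberStrategy G k) :
    ℕ → (Fin k → V) × V
  | 0 => (CS.init, RS.init CS.init)
  | n + 1 =>
      (CS.move (play CS RS n).1 (play CS RS n).2,
       RS.move (CS.move (play CS RS n).1 (play CS RS n).2) (play CS RS n).2)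

/-- The cops win with `k` cops if they have a strategy capturing the robber
(occupying the robber's vertex, either right after the robber's move or right
after the cops' own move) against every robber strategy. -/
def CopsWin (G : SimpleGraph V) (k : ℕ) : Prop :=
  ∃ CS : CopStrategy G k, ∀ RS : RobberStrategy G k,
    ∃ n, (∃ i, (play CS RS n).1 i = (play CS RS n).2) ∨
         (∃ i, (play CS RS (n + 1)).1 i = (play CS RS n).2)

/-- The cop number of `G`: the least number of cops having a winning strategy. -/
noncomputable def copNumber (G : SimpleGraph V) : ℕ := sInf {k | CopsWin G k}

open SimpleGraph in
/-- Two paths of total length below the girth coincide. -/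
lemma cr_path_unique {G : SimpleGraph V} {n : ℕ} (hg : ((n + 1 : ℕ) : ℕ∞) ≤ G.egirth)
    {u v : V} (p q : G.Walk u v) (hp : p.IsPath) (hq : q.IsPath)
    (hl : p.length + q.length ≤ n) : p = q := by
  classical
  let H : SimpleGraph V := SimpleGraph.fromEdgeSet {e | e ∈ p.edges ++ q.edges}
  have hHG : H ≤ G := by
    intro x y hxy
    rw [SimpleGraph.fromEdgeSet_adj] at hxy
    obtain ⟨h, -⟩ := hxy
    simp only [Set.mem_ofPred_eq, List.mem_append] at h
    rcases h with h | h
    · exact p.adj_of_mem_edges h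
    · exact q.adj_of_mem_edges h
  have hHe : ∀ e, e ∈ H.edgeSet → e ∈ p.edges ++ q.edges := by
    intro e he
    rw [SimpleGraph.edgeSet_fromEdgeSet] at he
    exact he.1
  have hac : H.IsAcyclic := by
    intro w c hc
    have h1 : c.edges.length ≤ (p.edges ++ q.edges).length := by
      apply List.Subperm.length_le
      apply List.Nodup.subperm hc.edges_nodup
      intro e he
      exact hHe e (c.edges_subset_edgeSet he)
    have h2 : (c.mapLe hHG).IsCycle := hc.mapLe hHG
    have h3 := hg.trans (G.egirth_le_length h2)
    simp at h1 h3
    norm_cast at h3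
    omega
  have hpH : ∀ e ∈ p.edges, e ∈ H.edgeSet := by
    intro e he
    rw [SimpleGraph.edgeSet_fromEdgeSet]
    exact ⟨by simp [he], G.not_isDiag_of_mem_edgeSet (p.edges_subset_edgeSet he)⟩
  have hqH : ∀ e ∈ q.edges, e ∈ H.edgeSet := by
    intro e he
    rw [SimpleGraph.edgeSet_fromEdgeSet]
    exact ⟨by simp [he], G.not_isDiag_of_mem_edgeSet (q.edges_subset_edgeSet he)⟩
  have key := hac.path_unique ⟨p.transfer H hpH, hp.transfer hpH⟩ ⟨q.transfer H hqH, hq.transfer hqH⟩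
  have key2 : p.transfer H hpH = q.transfer H hqH := congrArg Subtype.val key
  have e1 : (p.transfer H hpH).support = p.support := by simp
  have e2 : (q.transfer H hqH).support = q.support := by simp
  apply SimpleGraph.Walk.ext_support
  rw [← e1, ← e2, key2]

open SimpleGraph in
/-- In the ball of radius `2t`, the first step of a geodesic is unique. -/
lemma cr_step_unique {G : SimpleGraph V} (hconn : G.Connected) {t : ℕ}
    (hg : ((4 * t + 1 : ℕ) : ℕ∞) ≤ G.egirth) {r c x y : V}
    (hx : G.Adj r x) (hy : G.Adj r y) (hd : G.dist r c ≤ 2 * t)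
    (hxc : G.dist x c + 1 = G.dist r c) (hyc : G.dist y c + 1 = G.dist r c) : x = y := by
  obtain ⟨p, hp⟩ := hconn.exists_walk_length_eq_dist x c
  obtain ⟨q, hq⟩ := hconn.exists_walk_length_eq_dist y c
  have hp' : (Walk.cons hx p).length = G.dist r c := by simp [hp, hxc]
  have hq' : (Walk.cons hy q).length = G.dist r c := by simp [hq, hyc]
  have h := cr_path_unique hg _ _ ((Walk.cons hx p).isPath_of_length_eq_dist hp')
    ((Walk.cons hy q).isPath_of_length_eq_dist hq') (by omega)
  have := congrArg Walk.snd h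
  simpa using this

open SimpleGraph in
/-- Adjacent vertices are not equidistant from a near vertex. -/
lemma cr_dist_ne {G : SimpleGraph V} (hconn : G.Connected) {t : ℕ}
    (hg : ((4 * t + 1 : ℕ) : ℕ∞) ≤ G.egirth) {r c x : V}
    (hx : G.Adj r x) (hd : G.dist r c + 1 ≤ 2 * t) : G.dist x c ≠ G.dist r c := by
  classical
  intro he
  obtain ⟨p, hp⟩ := hconn.exists_walk_length_eq_dist x c
  obtain ⟨q, hq⟩ := hconn.exists_walk_length_eq_dist r c
  have hpP := p.isPath_of_length_eq_dist hp
  have hqP := q.isPath_of_length_eq_dist hq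
  have hr : r ∉ p.support := by
    intro hr
    have h1 : (p.takeUntil r hr).length + (p.dropUntil r hr).length = p.length := by
      rw [← Walk.length_append, Walk.take_spec]
    have h2 : G.dist r c ≤ (p.dropUntil r hr).length := dist_le _
    have h3 : G.dist x r ≤ (p.takeUntil r hr).length := dist_le _
    have h4 : G.dist x r = 1 := dist_eq_one_iff_adj.2 hx.symm
    omega
  have h := cr_path_unique hg (Walk.cons hx p) q (hpP.cons hr) hqP (by simp; omega)
  have := congrArg Walk.length h
  simp at this
  omega

open Classical in
/-- Predicted danger after the robber moves from `r` to `x`. -/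
noncomputable def crP (G : SimpleGraph V) (t : ℕ) (q : ℝ) {k : ℕ} (c : Fin k → V) (r x : V) : ℝ :=
  ∑ i, if G.dist r (c i) ≤ 2 * t ∧ G.dist x (c i) + 1 = G.dist r (c i)
    then q ^ ((G.dist r (c i) + 1) / 2 - 1) else 0

open Classical in
/-- Danger for a robber at `r` which arrived from `p`. -/
noncomputable def crF (G : SimpleGraph V) (t : ℕ) (q : ℝ) {k : ℕ} (c : Fin k → V) (r p : V) : ℝ :=
  ∑ i, if G.dist r (c i) + 2 ≤ 2 * t ∧ G.dist p (c i) + 1 ≠ G.dist r (c i)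
    then q ^ ((G.dist r (c i) + 1) / 2) else 0

/-- Safe positions (cops to move). -/
def crGood (G : SimpleGraph V) (t : ℕ) (q : ℝ) {k : ℕ} (c : Fin k → V) (r : V) : Prop :=
  ∃ p, G.Adj p r ∧ (∀ i, c i ≠ p) ∧ crP G t q c p r < 1

lemma crP_to_crF {G : SimpleGraph V} (hconn : G.Connected) {t : ℕ}
    (hg : ((4 * t + 1 : ℕ) : ℕ∞) ≤ G.egirth) {q : ℝ} (hq0 : 0 < q) (hq1 : q ≤ 1) {k : ℕ}
    {c c' : Fin k → V} (hc : ∀ i, c' i = c i ∨ G.Adj (c i) (c' i)) {p r : V} (hpr : G.Adj p r)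
    (hp : ∀ i, c i ≠ p) : crF G t q c' r p ≤ crP G t q c p r := by
  unfold crF crP
  apply Finset.sum_le_sum
  intro i _
  by_cases h : G.dist r (c' i) + 2 ≤ 2 * t ∧ G.dist p (c' i) + 1 ≠ G.dist r (c' i)
  swap
  · rw [if_neg h]; split_ifs <;> positivity
  obtain ⟨h1, h2⟩ := h
  have h3 : G.dist p (c' i) ≠ G.dist r (c' i) := cr_dist_ne hconn hg hpr.symm (by omega)
  have hpr1 : G.dist p r = 1 := SimpleGraph.dist_eq_one_iff_adj.2 hpr
  have hrp1 : G.dist r p = 1 := SimpleGraph.dist_eq_one_iff_adj.2 hpr.symm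
  have t1 : G.dist p (c' i) ≤ G.dist p r + G.dist r (c' i) := hconn.dist_triangle
  have t2 : G.dist r (c' i) ≤ G.dist r p + G.dist p (c' i) := hconn.dist_triangle
  have hd : G.dist p (c' i) = G.dist r (c' i) + 1 := by omega
  have hcc : G.dist (c i) (c' i) ≤ 1 := by
    rcases hc i with h | h
    · simp [h]
    · exact (SimpleGraph.dist_eq_one_iff_adj.2 h).le
  have hcc' : G.dist (c' i) (c i) ≤ 1 := by rwa [SimpleGraph.dist_comm]
  have t3 : G.dist p (c i) ≤ G.dist p (c' i) + G.dist (c' i) (c i) := hconn.dist_triangle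
  have t4 : G.dist r (c i) ≤ G.dist r (c' i) + G.dist (c' i) (c i) := hconn.dist_triangle
  have t5 : G.dist p (c' i) ≤ G.dist p (c i) + G.dist (c i) (c' i) := hconn.dist_triangle
  have t6 : G.dist r (c i) ≤ G.dist r p + G.dist p (c i) := hconn.dist_triangle
  have t7 : G.dist p (c i) ≤ G.dist p r + G.dist r (c i) := hconn.dist_triangle
  have h4 : G.dist p (c i) ≠ G.dist r (c i) := cr_dist_ne hconn hg hpr.symm (by omega)
  have h5 : G.dist r (c i) + 1 = G.dist p (c i) := by
    by_contra hne
    have h6 : G.dist r (c i) = G.dist p (c i) + 1 := by omega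
    have h7 : G.dist p (c i) = G.dist r (c' i) := by omega
    -- take the first step of a geodesic from p to c i
    have hpos : G.dist p (c i) ≠ 0 := by
      rw [Ne, hconn.dist_eq_zero_iff]
      exact fun h => hp i h.symm
    obtain ⟨w, hw⟩ := hconn.exists_walk_length_eq_dist p (c i)
    cases w with
    | nil => simp at hpos
    | cons hadj w' =>
      rename_i x
      simp only [SimpleGraph.Walk.length_cons] at hw
      have h8 : G.dist x (c i) ≤ w'.length := SimpleGraph.dist_le _
      have t8 : G.dist x (c' i) ≤ G.dist x (c i) + G.dist (c i) (c' i) := hconn.dist_triangle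
      have t9 : G.dist p (c' i) ≤ G.dist p x + G.dist x (c' i) := hconn.dist_triangle
      have h9 : G.dist p x = 1 := SimpleGraph.dist_eq_one_iff_adj.2 hadj
      have h10 : x = r := cr_step_unique (c := c' i) hconn hg hadj hpr (by omega) (by omega) (by omega)
      subst h10
      omega
  rw [if_pos ⟨h1, h2⟩, if_pos ⟨by omega, h5⟩]
  exact pow_le_pow_of_le_one hq0.le hq1 (by omega)

lemma crGood_ne {G : SimpleGraph V} {t : ℕ} (ht : 1 ≤ t)
    {q : ℝ} (hq0 : 0 < q) {k : ℕ} {c : Fin k → V} {r : V} (h : crGood G t q c r) (i : Fin k) :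
    c i ≠ r := by
  rintro rfl
  obtain ⟨p, hp, -, hP⟩ := h
  have hpr1 : G.dist p (c i) = 1 := SimpleGraph.dist_eq_one_iff_adj.2 hp
  refine absurd hP (not_lt.2 ?_)
  unfold crP
  refine le_trans ?_ (Finset.single_le_sum (fun j _ => ?_) (Finset.mem_univ i))
  · rw [if_pos ⟨by omega, by simp [hpr1]⟩]; simp [hpr1]
  · split_ifs <;> positivity

lemma cr_step [Fintype V] {G : SimpleGraph V} [DecidableRel G.Adj] (hconn : G.Connected) {t : ℕ}
    (ht : 1 ≤ t) (hg : ((4 * t + 1 : ℕ) : ℕ∞) ≤ G.egirth) {a D : ℝ} (ha : 1 < a) (haD : a ≤ D)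
    (hD : (G.minDegree : ℝ) = D + 1) {k : ℕ} (hk : 1 / a + k * a ^ (t - 1) / D ^ t ≤ 1)
    {c c' : Fin k → V} (hc : ∀ i, c' i = c i ∨ G.Adj (c i) (c' i)) {r : V}
    (h : crGood G t (a / D) c r) :
    (∀ i, c' i ≠ r) ∧ ∃ x, G.Adj r x ∧ crGood G t (a / D) c' x := by
  classical
  have ha0 : 0 < a := by linarith
  have hD0 : 0 < D := by linarith
  have hq0 : 0 < a / D := by positivity
  have hq1 : a / D ≤ 1 := by rw [div_le_one hD0]; exact haD
  obtain ⟨p, hpr, hp, hP⟩ := h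
  have hF := (crP_to_crF hconn hg hq0 hq1 hc hpr hp).trans_lt hP
  have hne : ∀ i, c' i ≠ r := by
    rintro i rfl
    refine absurd hF (not_lt.2 ?_)
    unfold crF
    refine le_trans ?_ (Finset.single_le_sum (fun j _ => ?_) (Finset.mem_univ i))
    · rw [if_pos ⟨by simp; omega, by simp⟩]; simp
    · split_ifs <;> positivity
  refine ⟨hne, ?_⟩
  suffices hs : ∃ x ∈ (G.neighborFinset r).erase p, crP G t (a / D) c' r x < 1 by
    obtain ⟨x, hx, hx1⟩ := hs
    have hrx : G.Adj r x := by simpa using (Finset.mem_erase.1 hx).2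
    exact ⟨x, hrx, r, hrx, hne, hx1⟩
  by_contra hcon
  push Not at hcon
  have hcard : D ≤ ((G.neighborFinset r).erase p).card := by
    rw [Finset.card_erase_of_mem (by simpa using hpr.symm), G.card_neighborFinset_eq_degree]
    have h1 := G.minDegree_le_degree r
    have h2 : (G.minDegree : ℝ) ≤ G.degree r := by exact_mod_cast h1
    have h3 : 1 ≤ G.degree r := by
      have : (1 : ℝ) ≤ G.degree r := by linarith
      exact_mod_cast this
    push_cast [Nat.cast_sub h3]
    linarith
  have hlow : (((G.neighborFinset r).erase p).card : ℝ) ≤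
      ∑ x ∈ (G.neighborFinset r).erase p, crP G t (a / D) c' r x := by
    have := Finset.card_nsmul_le_sum _ _ 1 hcon
    simpa using this
  have hup : ∑ x ∈ (G.neighborFinset r).erase p, crP G t (a / D) c' r x ≤
      D * (crF G t (a / D) c' r p / a + k * a ^ (t - 1) / D ^ t) := by
    have e : D * (crF G t (a / D) c' r p / a + k * a ^ (t - 1) / D ^ t) =
        ∑ i : Fin k, ((if G.dist r (c' i) + 2 ≤ 2 * t ∧ G.dist p (c' i) + 1 ≠ G.dist r (c' i)
          then (a / D) ^ ((G.dist r (c' i) + 1) / 2) else 0) * (D / a) + (a / D) ^ (t - 1)) := by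
      rw [Finset.sum_add_distrib, ← Finset.sum_mul]
      simp only [Finset.sum_const, Finset.card_univ, Fintype.card_fin, nsmul_eq_mul]
      unfold crF
      obtain ⟨s, rfl⟩ : ∃ s, t = s + 1 := ⟨t - 1, by omega⟩
      simp only [Nat.add_sub_cancel]
      rw [div_pow, pow_succ]
      field_simp
    rw [e]
    unfold crP
    rw [Finset.sum_comm]
    apply Finset.sum_le_sum
    intro i _
    have hnn : 0 ≤ (if G.dist r (c' i) + 2 ≤ 2 * t ∧ G.dist p (c' i) + 1 ≠ G.dist r (c' i)
          then (a / D) ^ ((G.dist r (c' i) + 1) / 2) else 0) * (D / a) := by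
      apply mul_nonneg _ (by positivity)
      split_ifs <;> positivity
    have hqt : 0 ≤ (a / D) ^ (t - 1) := by positivity
    by_cases hex : ∃ x ∈ (G.neighborFinset r).erase p,
        G.dist r (c' i) ≤ 2 * t ∧ G.dist x (c' i) + 1 = G.dist r (c' i)
    swap
    · push Not at hex
      rw [Finset.sum_eq_zero]
      · positivity
      · intro x hx
        rw [if_neg]
        rintro ⟨h1, h2⟩
        exact hex x hx h1 h2
    obtain ⟨x, hx, hx1, hx2⟩ := hex
    have hrx : G.Adj r x := by simpa using (Finset.mem_erase.1 hx).2
    have hxp : x ≠ p := (Finset.mem_erase.1 hx).1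
    rw [Finset.sum_eq_single_of_mem x hx]
    · rw [if_pos ⟨hx1, hx2⟩]
      by_cases hd : G.dist r (c' i) + 2 ≤ 2 * t
      · rw [if_pos ⟨hd, fun hh => hxp (cr_step_unique hconn hg hrx hpr.symm hx1 hx2 hh)⟩]
        obtain ⟨m, hm⟩ : ∃ m, (G.dist r (c' i) + 1) / 2 = m + 1 :=
          ⟨(G.dist r (c' i) + 1) / 2 - 1, by omega⟩
        rw [hm, Nat.add_sub_cancel, pow_succ]
        have : (a / D) ^ m * (a / D) * (D / a) = (a / D) ^ m := by field_simp
        rw [this]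
        linarith
      · have : (G.dist r (c' i) + 1) / 2 - 1 = t - 1 := by omega
        rw [this]
        linarith
    · intro y hy hyx
      rw [if_neg]
      rintro ⟨h1, h2⟩
      have hry : G.Adj r y := by simpa using (Finset.mem_erase.1 hy).2
      exact hyx (cr_step_unique hconn hg hry hrx h1 h2 hx2)
  have h1 : D ≤ D * (crF G t (a / D) c' r p / a + k * a ^ (t - 1) / D ^ t) := by linarith
  have h2 : crF G t (a / D) c' r p / a < 1 / a := by gcongr
  have h3 : crF G t (a / D) c' r p / a + k * a ^ (t - 1) / D ^ t < 1 := by linarith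
  nlinarith

/-- Starting from any cop placement there is a safe robber position. -/
lemma cr_start [Fintype V] {G : SimpleGraph V} [DecidableRel G.Adj] (hconn : G.Connected) {t : ℕ}
    (ht : 1 ≤ t) (hg : ((4 * t + 1 : ℕ) : ℕ∞) ≤ G.egirth) {a D : ℝ} (ha : 1 < a) (haD : a ≤ D)
    (hD : (G.minDegree : ℝ) = D + 1) {k : ℕ} (hk : 1 / a + k * a ^ (t - 1) / D ^ t ≤ 1)
    (c : Fin k → V) : ∃ r, crGood G t (a / D) c r := by
  classical
  have hdeg : ∀ v, 1 < G.degree v := by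
    intro v
    have h1 := G.minDegree_le_degree v
    have h2 : (G.minDegree : ℝ) ≤ G.degree v := by exact_mod_cast h1
    have : (1 : ℝ) < G.degree v := by linarith
    exact_mod_cast this
  obtain ⟨u⟩ := hconn.nonempty
  have h0 : ∃ r, crGood G t (a / D) (fun _ : Fin k => u) r := by
    obtain ⟨p, hp⟩ := (G.degree_pos_iff_exists_adj u).1 (by have := hdeg u; omega)
    obtain ⟨r, hr, hru⟩ := Finset.exists_mem_ne
      (by rw [G.card_neighborFinset_eq_degree]; exact hdeg p) u
    have hpr : G.Adj p r := by simpa using hr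
    refine ⟨r, p, hpr, fun _ => hp.ne, ?_⟩
    have hpu : G.dist p u = 1 := SimpleGraph.dist_eq_one_iff_adj.2 hp.symm
    have hru' : G.dist r u ≠ 0 := by rw [Ne, hconn.dist_eq_zero_iff]; exact hru
    unfold crP
    rw [Finset.sum_eq_zero]
    · norm_num
    · intro i _
      rw [if_neg]
      rintro ⟨-, h⟩
      dsimp only at h
      omega
  -- all cops can walk to their places
  have hwalk : ∀ (c₀ : Fin k → V) (i : Fin k) (x y : V), G.Walk x y →
      (∃ r, crGood G t (a / D) (Function.update c₀ i x) r) →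
      ∃ r, crGood G t (a / D) (Function.update c₀ i y) r := by
    intro c₀ i x y w
    induction w with
    | nil => exact id
    | cons hadj w ih =>
      rintro ⟨r, hr⟩
      apply ih
      rename_i x' y' z'
      obtain ⟨-, s, -, hs⟩ := cr_step (c' := Function.update c₀ i y') hconn ht hg ha haD hD hk
        (by
          intro j
          by_cases hj : j = i
          · subst hj; right; simpa using hadj
          · left; simp [hj]) hr
      exact ⟨s, hs⟩
  have hall : ∀ s : Finset (Fin k), ∃ r,
      crGood G t (a / D) (fun i => if i ∈ s then c i else u) r := by
    intro s
    induction s using Finset.induction_on with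
    | empty => simpa using h0
    | insert i s his ih =>
      obtain ⟨w⟩ := hconn.preconnected u (c i)
      have := hwalk (fun i => if i ∈ s then c i else u) i u (c i) w (by
        convert ih using 3
        ext j
        by_cases hj : j = i
        · subst hj; simp [his]
        · simp [hj])
      convert this using 3
      ext j
      by_cases hj : j = i
      · subst hj; simp
      · simp [hj]
  simpa using hall Finset.univ

lemma cr_not_copsWin [Fintype V] {G : SimpleGraph V} [DecidableRel G.Adj] (hconn : G.Connected)
    {t : ℕ}
    (ht : 1 ≤ t) (hg : ((4 * t + 1 : ℕ) : ℕ∞) ≤ G.egirth) {a D : ℝ} (ha : 1 < a) (haD : a ≤ D)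
    (hD : (G.minDegree : ℝ) = D + 1) {k : ℕ} (hk : 1 / a + k * a ^ (t - 1) / D ^ t ≤ 1) :
    ¬ CopsWin G k := by
  classical
  rintro ⟨CS, hCS⟩
  have hq0 : 0 < a / D := div_pos (by linarith) (by linarith)
  choose ini hini using fun c : Fin k → V => cr_start hconn ht hg ha haD hD hk c
  let RS : RobberStrategy G k :=
    { init := ini
      move := fun c r => if h : ∃ x, G.Adj r x ∧ crGood G t (a / D) c x then h.choose else r
      valid := by
        intro c r
        by_cases h : ∃ x, G.Adj r x ∧ crGood G t (a / D) c x
        · right; rw [dif_pos h]; exact h.choose_spec.1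
        · left; rw [dif_neg h] }
  have hst : ∀ n, crGood G t (a / D) (play CS RS n).1 (play CS RS n).2 →
      (∀ i, (play CS RS (n + 1)).1 i ≠ (play CS RS n).2) ∧
      crGood G t (a / D) (play CS RS (n + 1)).1 (play CS RS (n + 1)).2 := by
    intro n hn
    obtain ⟨h1, h2⟩ := cr_step (c' := (play CS RS (n + 1)).1) hconn ht hg ha haD hD hk
      (fun i => CS.valid _ _ i) hn
    refine ⟨h1, ?_⟩
    have e : (play CS RS (n + 1)).2 = h2.choose := by
      change RS.move (play CS RS (n + 1)).1 (play CS RS n).2 = _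
      exact dif_pos h2
    rw [e]
    exact h2.choose_spec.2
  have hgood : ∀ n, crGood G t (a / D) (play CS RS n).1 (play CS RS n).2 := by
    intro n
    induction n with
    | zero => exact hini _
    | succ n ih => exact (hst n ih).2
  obtain ⟨n, ⟨i, hi⟩ | ⟨i, hi⟩⟩ := hCS RS
  · exact crGood_ne ht hq0 (hgood n) i hi
  · exact (hst n (hgood n)).1 i hi

lemma cr_copsWin_copNumber [Fintype V] (G : SimpleGraph V) : CopsWin G (copNumber G) := by
  classical
  refine Nat.sInf_mem (s := {k | CopsWin G k}) ⟨Fintype.card V, ?_⟩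
  refine ⟨⟨(Fintype.equivFin V).symm, fun c _ => c, fun _ _ _ => Or.inl rfl⟩, fun RS => ⟨0, Or.inl ?_⟩⟩
  obtain ⟨i, hi⟩ := (Fintype.equivFin V).symm.surjective
    (RS.init (Fintype.equivFin V).symm)
  exact ⟨i, hi⟩

lemma cr_copNumber_pos [Fintype V] (G : SimpleGraph V) [Nonempty V] : 1 ≤ copNumber G := by
  have h := cr_copsWin_copNumber G
  by_contra hlt
  have h0 : copNumber G = 0 := by omega
  rw [h0] at h
  obtain ⟨CS, hCS⟩ := h
  obtain ⟨v⟩ := ‹Nonempty V›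
  obtain ⟨n, ⟨i, -⟩ | ⟨i, -⟩⟩ := hCS ⟨fun _ => v, fun _ r => r, fun _ _ => Or.inl rfl⟩
  · exact i.elim0
  · exact i.elim0

/-- The numerical choice of the discount factor. -/
lemma cr_factor {t : ℕ} (ht : 1 ≤ t) :
    ∃ a : ℝ, 1 < a ∧ a ≤ 2 ∧ 1 / a + a ^ (t - 1) / (Real.exp 1 * t) ≤ 1 := by
  obtain ⟨s, rfl⟩ : ∃ s, t = s + 1 := ⟨t - 1, by omega⟩
  have he := Real.add_one_le_exp (1 : ℝ)
  rcases Nat.eq_zero_or_pos s with rfl | hs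
  · refine ⟨2, by norm_num, le_rfl, ?_⟩
    have : 1 / Real.exp 1 ≤ 1 / 2 := one_div_le_one_div_of_le (by norm_num) (by linarith)
    norm_num at this ⊢
    linarith
  · have hs' : (1 : ℝ) ≤ s := by exact_mod_cast hs
    have hs0 : (0 : ℝ) < s := by linarith
    refine ⟨1 + 1 / s, ?_, ?_, ?_⟩
    · have : (0 : ℝ) < 1 / s := by positivity
      linarith
    · have : (1 : ℝ) / s ≤ 1 := by rw [div_le_one hs0]; exact hs'
      linarith
    · have h1 : (1 + 1 / (s : ℝ)) ^ s ≤ Real.exp 1 := by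
        have h2 : 1 + 1 / (s : ℝ) ≤ Real.exp (1 / s) := by
          have := Real.add_one_le_exp (1 / (s : ℝ)); linarith
        calc (1 + 1 / (s : ℝ)) ^ s ≤ (Real.exp (1 / s)) ^ s := by gcongr
          _ = Real.exp 1 := by
            rw [← Real.exp_nat_mul]; congr 1; field_simp
      simp only [Nat.add_sub_cancel]
      have h3 : (1 + 1 / (s : ℝ)) ^ s / (Real.exp 1 * ((s + 1 : ℕ) : ℝ)) ≤
          Real.exp 1 / (Real.exp 1 * ((s + 1 : ℕ) : ℝ)) := by gcongr
      have h4 : Real.exp 1 / (Real.exp 1 * ((s + 1 : ℕ) : ℝ)) = 1 / (s + 1) := by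
        push_cast
        have := Real.exp_pos 1
        field_simp
      have h5 : 1 / (1 + 1 / (s : ℝ)) + 1 / (s + 1) = 1 := by field_simp
      linarith

/-- If `t ≥ 1` and `G` is a finite connected graph of girth at
least `4t + 1` and minimum degree `δ`, then `c(G) > (δ - 1) ^ t / (e * t)`. -/
theorem copNumber_gt_of_girth_ge [Fintype V] (G : SimpleGraph V) [DecidableRel G.Adj]
    (hconn : G.Connected) (t : ℕ) (ht : 1 ≤ t)
    (hgirth : ((4 * t + 1 : ℕ) : ℕ∞) ≤ G.egirth) :
    ((G.minDegree : ℝ) - 1) ^ t / (Real.exp 1 * t) < (copNumber G : ℝ) := by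
  have := hconn.nonempty
  have hpos : (1 : ℝ) ≤ copNumber G := by exact_mod_cast cr_copNumber_pos G
  have he := Real.add_one_le_exp (1 : ℝ)
  have ht' : (1 : ℝ) ≤ t := by exact_mod_cast ht
  have het : 1 < Real.exp 1 * t := by nlinarith
  rcases Nat.lt_or_ge G.minDegree 3 with hlt | hge
  · refine lt_of_lt_of_le ?_ hpos
    rw [div_lt_one (by linarith)]
    refine lt_of_le_of_lt ?_ het
    have habs : |(G.minDegree : ℝ) - 1| ≤ 1 := by
      have : (G.minDegree : ℝ) ≤ 2 := by exact_mod_cast (by omega : G.minDegree ≤ 2)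
      have h0 : (0 : ℝ) ≤ G.minDegree := by positivity
      rw [abs_le]; constructor <;> linarith
    calc ((G.minDegree : ℝ) - 1) ^ t ≤ |((G.minDegree : ℝ) - 1) ^ t| := le_abs_self _
      _ = |(G.minDegree : ℝ) - 1| ^ t := abs_pow _ _
      _ ≤ 1 := pow_le_one₀ (abs_nonneg _) habs
  · by_contra hcon
    push Not at hcon
    obtain ⟨a, ha1, ha2, ha⟩ := cr_factor ht
    have h3 : (3 : ℝ) ≤ G.minDegree := by exact_mod_cast hge
    set D : ℝ := (G.minDegree : ℝ) - 1 with hDdef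
    have hD2 : 2 ≤ D := by linarith
    refine cr_not_copsWin hconn ht hgirth (a := a) (D := D) ha1 (by linarith) (by linarith) ?_
      (cr_copsWin_copNumber G)
    refine le_trans ?_ ha
    have hD0 : 0 < D ^ t := by positivity
    have : (copNumber G : ℝ) * a ^ (t - 1) / D ^ t ≤
        (D ^ t / (Real.exp 1 * t)) * a ^ (t - 1) / D ^ t := by gcongr
    have e : (D ^ t / (Real.exp 1 * t)) * a ^ (t - 1) / D ^ t = a ^ (t - 1) / (Real.exp 1 * t) := by
      field_simp
    linarith
end

section
/- Every finite connected graph G with finite girth g and minimum degree δ has cop number c(G) ≥ (1/g)·(δ−1)^{⌊(g−1)/4⌋}. -/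
/-!
The game of cops and robbers on a (finite connected) simple graph `G`:
first the `k` cops choose starting vertices, then the robber chooses a starting
vertex (knowing the cops' positions); the players alternate turns (cops first),
each cop may stay or move to an adjacent vertex, and the robber may stay or move
to an adjacent vertex.  The cops win if at some moment a cop occupies the same
vertex as the robber.  The cop number is the least `k` for which the cops have
a winning strategy.
-/

variable {V : Type*}

namespace CopAux

open SimpleGraph

/-- Two distinct paths with common endpoints yield a short cycle. -/
lemma egirth_le_of_paths {G : SimpleGraph V} {u v : V} (p q : G.Walk u v)
    (hp : p.IsPath) (hq : q.IsPath) (hne : p ≠ q) :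
    G.egirth ≤ ((p.length + q.length : ℕ) : ℕ∞) := by
  classical
  set S : Set (Sym2 V) := {e | e ∈ p.edges ++ q.edges} with hS
  set H : SimpleGraph V := SimpleGraph.fromEdgeSet S with hH
  have hSG : ∀ e ∈ S, e ∈ G.edgeSet := by
    intro e he
    simp only [hS, Set.mem_ofPred_eq, List.mem_append] at he
    rcases he with he | he
    · exact p.edges_subset_edgeSet he
    · exact q.edges_subset_edgeSet he
  have hSH : ∀ e ∈ S, e ∈ H.edgeSet := by
    intro e he
    rw [hH, SimpleGraph.edgeSet_fromEdgeSet]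
    exact ⟨he, fun hd => G.not_isDiag_of_mem_edgeSet (hSG e he) hd⟩
  have hHS : ∀ e ∈ H.edgeSet, e ∈ S := by
    intro e he
    rw [hH, SimpleGraph.edgeSet_fromEdgeSet] at he
    exact he.1
  have hHG : H ≤ G := by
    rw [← SimpleGraph.edgeSet_subset_edgeSet]
    exact fun e he => hSG e (hHS e he)
  have hp1 : ∀ e ∈ p.edges, e ∈ H.edgeSet := fun e he => hSH e (by simp [hS, he])
  have hq1 : ∀ e ∈ q.edges, e ∈ H.edgeSet := fun e he => hSH e (by simp [hS, he])
  have hnac : ¬ H.IsAcyclic := by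
    intro hac
    have h := hac.path_unique ⟨p.transfer H hp1, hp.transfer hp1⟩ ⟨q.transfer H hq1, hq.transfer hq1⟩
    have h' : p.transfer H hp1 = q.transfer H hq1 := congrArg Subtype.val h
    apply hne
    apply SimpleGraph.Walk.ext_support
    have := congrArg SimpleGraph.Walk.support h'
    simpa using this
  have : ∃ (a : V) (c : H.Walk a a), c.IsCycle := by
    by_contra hcon
    push Not at hcon
    exact hnac (fun a c hc => hcon a c hc)
  obtain ⟨a, c, hc⟩ := this
  have hc' : (c.mapLe hHG).IsCycle := (SimpleGraph.Walk.isCycle_mapLe hHG).2 hc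
  refine (SimpleGraph.egirth_le_length hc').trans ?_
  have hlen : (c.mapLe hHG).length = c.length := by simp
  rw [hlen]
  norm_cast
  have hsub : c.edges ⊆ p.edges ++ q.edges := fun e he => hHS e (c.edges_subset_edgeSet he)
  have hnd : c.edges.Nodup := hc.isCircuit.isTrail.edges_nodup
  have := (List.subperm_of_subset hnd hsub).length_le
  simpa using this

lemma girth_A {G : SimpleGraph V} (hconn : G.Connected) {v u w c : V}
    (hu : G.Adj v u) (hw : G.Adj v w) (hne : u ≠ w)
    (h1 : G.dist c v = G.dist c u + 1) (h2 : G.dist c v = G.dist c w + 1) :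
    G.egirth ≤ ((2 * G.dist c v : ℕ) : ℕ∞) := by
  obtain ⟨p, hp⟩ := hconn.exists_walk_length_eq_dist u c
  obtain ⟨q, hq⟩ := hconn.exists_walk_length_eq_dist w c
  rw [SimpleGraph.dist_comm] at hp hq
  have e1 : (SimpleGraph.Walk.cons hu p).length = G.dist v c := by
    rw [SimpleGraph.dist_comm, h1, SimpleGraph.Walk.length_cons, hp]
  have e2 : (SimpleGraph.Walk.cons hw q).length = G.dist v c := by
    rw [SimpleGraph.dist_comm, h2, SimpleGraph.Walk.length_cons, hq]
  have := egirth_le_of_paths _ _ (SimpleGraph.Walk.isPath_of_length_eq_dist _ e1)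
    (SimpleGraph.Walk.isPath_of_length_eq_dist _ e2) (by
      intro h
      have := congrArg SimpleGraph.Walk.snd h
      simp at this
      exact hne this)
  rw [e1, e2, SimpleGraph.dist_comm] at this
  rwa [two_mul]

lemma girth_B {G : SimpleGraph V} (hconn : G.Connected) {v w c : V}
    (hw : G.Adj v w) (h1 : G.dist c v = G.dist c w) :
    G.egirth ≤ ((2 * G.dist c v + 1 : ℕ) : ℕ∞) := by
  classical
  obtain ⟨p, hp⟩ := hconn.exists_walk_length_eq_dist v c
  obtain ⟨q, hq⟩ := hconn.exists_walk_length_eq_dist w c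
  have hqp := q.isPath_of_length_eq_dist hq
  have hpp := p.isPath_of_length_eq_dist hp
  rw [SimpleGraph.dist_comm] at hp hq
  have hv : v ∉ q.support := by
    intro hv
    have e := congrArg SimpleGraph.Walk.length (q.take_spec hv)
    rw [SimpleGraph.Walk.length_append] at e
    have := SimpleGraph.dist_le (q.dropUntil v hv)
    rw [SimpleGraph.dist_comm] at this
    have h0 : (q.takeUntil v hv).length = 0 := by omega
    exact hw.ne (SimpleGraph.Walk.eq_of_length_eq_zero h0).symm
  have hpath : (SimpleGraph.Walk.cons hw q).IsPath := by
    rw [SimpleGraph.Walk.cons_isPath_iff]; exact ⟨hqp, hv⟩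
  have := egirth_le_of_paths p _ hpp hpath (by
    intro h
    have := congrArg SimpleGraph.Walk.length h
    rw [SimpleGraph.Walk.length_cons] at this
    omega)
  rw [SimpleGraph.Walk.length_cons, hp, hq, ← h1] at this
  convert this using 2
  omega

/-- Turning a safety invariant into a winning positional robber strategy. -/
lemma not_copsWin_of_inv [Nonempty V] {G : SimpleGraph V} {k : ℕ}
    (W : (Fin k → V) → V → Prop)
    (h0 : ∀ c, ∃ r, W c r)
    (h1 : ∀ c r, W c r → ∀ i, c i ≠ r)
    (h2 : ∀ (c c' : Fin k → V) r, (∀ i, c' i = c i ∨ G.Adj (c i) (c' i)) → W c r → ∀ i, c' i ≠ r)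
    (h3 : ∀ (c c' : Fin k → V) r, (∀ i, c' i = c i ∨ G.Adj (c i) (c' i)) → W c r →
      ∃ r', G.Adj r r' ∧ W c' r') : ¬ CopsWin G k := by
  classical
  rintro ⟨CS, hCS⟩
  choose ini hini using h0
  let mv : (Fin k → V) → V → V := fun c r =>
    if h : ∃ r', G.Adj r r' ∧ W c r' then h.choose else r
  have hmv : ∀ c r, (∃ r', G.Adj r r' ∧ W c r') → G.Adj r (mv c r) ∧ W c (mv c r) := by
    intro c r h
    simp only [mv, dif_pos h]
    exact h.choose_spec
  let RS : RobberStrategy G k :=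
    { init := ini
      move := mv
      valid := by
        intro c r
        by_cases h : ∃ r', G.Adj r r' ∧ W c r'
        · exact Or.inr (hmv c r h).1
        · left; simp only [mv, dif_neg h] }
  have key : ∀ n, W (play CS RS n).1 (play CS RS n).2 := by
    intro n
    induction n with
    | zero => exact hini _
    | succ n ih => exact (hmv _ _ (h3 _ _ _ (CS.valid _ _) ih)).2
  obtain ⟨n, ⟨i, hi⟩ | ⟨i, hi⟩⟩ := hCS RS
  · exact h1 _ _ (key n) i hi
  · exact h2 _ _ _ (CS.valid _ _) (key n) i hi

lemma copsWin_card [Fintype V] [Nonempty V] (G : SimpleGraph V) : CopsWin G (Fintype.card V) := by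
  refine ⟨⟨fun i => (Fintype.equivFin V).symm i, fun c _ => c, fun _ _ _ => Or.inl rfl⟩, ?_⟩
  intro RS
  exact ⟨0, Or.inl ⟨Fintype.equivFin V (RS.init fun i => (Fintype.equivFin V).symm i), by simp [play]⟩⟩

open Classical in
/-- Weight of a cop at `x` against a robber at `v` who came from `p`. -/
noncomputable def wt (G : SimpleGraph V) (t : ℕ) (b : ℝ) (x v p : V) : ℝ :=
  if G.dist x p = G.dist x v + 1 ∧ G.dist x v + 1 ≤ 2 * t then (b⁻¹) ^ (G.dist x v / 2) else 0

lemma wt_nonneg (G : SimpleGraph V) (t : ℕ) {b : ℝ} (hb : 1 ≤ b) (x v p : V) :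
    0 ≤ wt G t b x v p := by
  unfold wt; split_ifs <;> positivity

lemma wt_pos {G : SimpleGraph V} {t : ℕ} {b : ℝ} {x v p : V}
    (h : G.dist x p = G.dist x v + 1 ∧ G.dist x v + 1 ≤ 2 * t) :
    wt G t b x v p = (b⁻¹) ^ (G.dist x v / 2) := if_pos h

lemma wt_neg {G : SimpleGraph V} {t : ℕ} {b : ℝ} {x v p : V}
    (h : ¬ (G.dist x p = G.dist x v + 1 ∧ G.dist x v + 1 ≤ 2 * t)) :
    wt G t b x v p = 0 := if_neg h

lemma dist_lip {G : SimpleGraph V} (hconn : G.Connected) {a b : V} (h : G.Adj a b) (x : V) :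
    G.dist x a ≤ G.dist x b + 1 ∧ G.dist x b ≤ G.dist x a + 1 := by
  have h1 := hconn.dist_triangle (u := x) (v := a) (w := b)
  have h2 := hconn.dist_triangle (u := x) (v := b) (w := a)
  rw [SimpleGraph.dist_eq_one_iff_adj.2 h] at h1
  rw [SimpleGraph.dist_eq_one_iff_adj.2 h.symm] at h2
  exact ⟨h2, h1⟩

/-- A cop not in front enters only at large distance. -/
lemma entry {G : SimpleGraph V} (hconn : G.Connected) {t : ℕ}
    (hg : ((4 * t + 1 : ℕ) : ℕ∞) ≤ G.egirth) {x x' v p u : V}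
    (hx : x' = x ∨ G.Adj x x') (hp : G.Adj v p) (hu : G.Adj v u) (hne : u ≠ p)
    (hF : ¬ (G.dist x p = G.dist x v + 1 ∧ G.dist x v + 1 ≤ 2 * t))
    (h1 : G.dist x' v = G.dist x' u + 1) : 2 * t ≤ G.dist x' u + 2 := by
  have lip : ∀ y, G.dist x' y ≤ G.dist x y + 1 ∧ G.dist x y ≤ G.dist x' y + 1 := by
    intro y
    rcases hx with rfl | hx
    · omega
    · have := dist_lip hconn hx y
      rw [SimpleGraph.dist_comm, SimpleGraph.dist_comm (u := y) (v := x')] at this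
      omega
  by_contra hcon
  have A : ∀ y, G.dist y v = G.dist y u + 1 → G.dist y v = G.dist y p + 1 → 2 * t < G.dist y v := by
    intro y ha hb
    have := hg.trans (girth_A hconn hu hp hne ha hb)
    norm_cast at this
    omega
  have B : ∀ y, G.dist y v = G.dist y p → 2 * t ≤ G.dist y v := by
    intro y ha
    have := hg.trans (girth_B hconn hp ha)
    norm_cast at this
    omega
  have A1 := A x
  have A2 := A x'
  have B1 := B x
  have B2 := B x'
  have l1 := lip v
  have l2 := lip u
  have l3 := lip p
  have l4 := dist_lip hconn hp x
  have l5 := dist_lip hconn hp x'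
  have l6 := dist_lip hconn hu x
  have l7 := dist_lip hconn hu x'
  omega

lemma sum_wt_le [Fintype V] [DecidableEq V] {G : SimpleGraph V} [DecidableRel G.Adj]
    (hconn : G.Connected) {t : ℕ} (ht : 1 ≤ t)
    (hg : ((4 * t + 1 : ℕ) : ℕ∞) ≤ G.egirth) {b : ℝ} (hb : 1 ≤ b) {x x' v p : V}
    (hx : x' = x ∨ G.Adj x x') (hp : G.Adj v p) :
    ∑ u ∈ (G.neighborFinset v).erase p, wt G t b x' u v ≤ b * (wt G t b x v p + (b⁻¹) ^ t) := by
  have hb0 : 0 < b := by linarith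
  have hpw : ∀ m n : ℕ, n ≤ m + 1 → (b⁻¹) ^ m ≤ b * (b⁻¹) ^ n := by
    intro m n h
    have e : (b⁻¹) ^ m = b * (b⁻¹) ^ (m + 1) := by
      rw [pow_succ]; field_simp
    rw [e]
    exact mul_le_mul_of_nonneg_left
      (pow_le_pow_of_le_one (by positivity) (inv_le_one_of_one_le₀ hb) h) hb0.le
  by_cases hex : ∃ u ∈ (G.neighborFinset v).erase p,
      G.dist x' v = G.dist x' u + 1 ∧ G.dist x' u + 1 ≤ 2 * t
  · obtain ⟨u, hu, hF⟩ := hex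
    have hu' : u ≠ p ∧ G.Adj v u := by simpa using hu
    rw [Finset.sum_eq_single_of_mem u hu]
    · rw [wt_pos hF]
      by_cases hF' : G.dist x p = G.dist x v + 1 ∧ G.dist x v + 1 ≤ 2 * t
      · rw [wt_pos hF']
        have l : G.dist x v ≤ G.dist x' v + 1 := by
          rcases hx with rfl | hx
          · omega
          · have := dist_lip hconn hx v
            rw [SimpleGraph.dist_comm, SimpleGraph.dist_comm (u := v) (v := x')] at this
            omega
        have := hpw (G.dist x' u / 2) (G.dist x v / 2) (by omega)
        have h2 : 0 ≤ b * (b⁻¹) ^ t := by positivity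
        rw [mul_add]; linarith
      · rw [wt_neg hF']
        have := entry hconn hg hx hp hu'.2 hu'.1 hF' hF.1
        rw [zero_add]
        exact hpw _ _ (by omega)
    · intro w hw hwu
      have hw' : w ≠ p ∧ G.Adj v w := by simpa using hw
      apply wt_neg
      intro hF2
      have := hg.trans (girth_A hconn hu'.2 hw'.2 hwu.symm hF.1 hF2.1)
      norm_cast at this
      omega
  · push Not at hex
    rw [Finset.sum_eq_zero]
    · have := wt_nonneg G t hb x v p
      positivity
    · intro u hu
      apply wt_neg
      rintro ⟨h1, h2⟩
      have := hex u hu h1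
      omega

/-- Total weight. -/
noncomputable def Psi (G : SimpleGraph V) (t : ℕ) (b : ℝ) {k : ℕ} (c : Fin k → V) (v p : V) : ℝ :=
  ∑ i, wt G t b (c i) v p

lemma step [Fintype V] {G : SimpleGraph V} [DecidableRel G.Adj]
    (hconn : G.Connected) {t : ℕ} (ht : 1 ≤ t)
    (hg : ((4 * t + 1 : ℕ) : ℕ∞) ≤ G.egirth) (hδ : 3 ≤ G.minDegree)
    {b : ℝ} (hbdef : b = ((G.minDegree : ℝ) - 1) * (t / (t + 1))) (hb : 1 ≤ b) {k : ℕ}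
    {c c' : Fin k → V} (hc : ∀ i, c' i = c i ∨ G.Adj (c i) (c' i)) {v p : V} (hp : G.Adj v p) :
    ∃ u, G.Adj v u ∧
      Psi G t b c' u v ≤ (t / (t + 1)) * (Psi G t b c v p + k * (b⁻¹) ^ t) := by
  classical
  set X := (t / (t + 1) : ℝ) * (Psi G t b c v p + k * (b⁻¹) ^ t) with hX
  have hPsi : 0 ≤ Psi G t b c v p := Finset.sum_nonneg fun i _ => wt_nonneg G t hb _ _ _
  have hX0 : 0 ≤ X := by positivity
  have hsum : ∑ u ∈ (G.neighborFinset v).erase p, Psi G t b c' u v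
      ≤ b * (Psi G t b c v p + k * (b⁻¹) ^ t) := by
    unfold Psi
    rw [Finset.sum_comm]
    calc _ ≤ ∑ i : Fin k, b * (wt G t b (c i) v p + (b⁻¹) ^ t) :=
          Finset.sum_le_sum fun i _ => sum_wt_le hconn ht hg hb (hc i) hp
      _ = _ := by
          rw [← Finset.mul_sum, Finset.sum_add_distrib]; simp
  have hcard : ((G.minDegree : ℝ) - 1) ≤ ((G.neighborFinset v).erase p).card := by
    rw [Finset.card_erase_of_mem (by simpa using hp), SimpleGraph.card_neighborFinset_eq_degree]
    have := G.minDegree_le_degree v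
    rw [Nat.cast_sub (by omega)]
    have : (G.minDegree : ℝ) ≤ G.degree v := by exact_mod_cast this
    push_cast
    linarith
  have hbX : b * (Psi G t b c v p + k * (b⁻¹) ^ t) = ((G.minDegree : ℝ) - 1) * X := by
    rw [hX, ← mul_assoc, ← hbdef]
  have hd : (3 : ℝ) ≤ G.minDegree := by exact_mod_cast hδ
  have hne : ((G.neighborFinset v).erase p).Nonempty := by
    rw [← Finset.card_pos]
    have : (0 : ℝ) < ((G.neighborFinset v).erase p).card := by linarith
    exact_mod_cast this
  obtain ⟨u, hu, hle⟩ := Finset.exists_le_of_sum_le (f := fun u => Psi G t b c' u v)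
    (g := fun _ => X) hne (by
      refine hsum.trans ?_
      rw [hbX, Finset.sum_const, nsmul_eq_mul]
      exact mul_le_mul_of_nonneg_right hcard hX0)
  exact ⟨u, by simpa using (Finset.mem_erase.1 hu).2, hle⟩

lemma far_of_Psi {G : SimpleGraph V}
    (hconn : G.Connected) {t : ℕ} (ht : 1 ≤ t)
    (hg : ((4 * t + 1 : ℕ) : ℕ∞) ≤ G.egirth) {b : ℝ} (hb : 1 ≤ b) {k : ℕ}
    {c : Fin k → V} {v u : V} (hu : G.Adj v u) (hv : ∀ i, c i ≠ v)
    (hlt : Psi G t b c u v < 1) (i : Fin k) : 2 ≤ G.dist (c i) u := by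
  by_contra hcon
  have hpos : 0 < G.dist (c i) v := hconn.pos_dist_of_ne (hv i)
  have hl := dist_lip hconn hu (c i)
  have hB : G.dist (c i) v ≠ G.dist (c i) u := by
    intro h
    have := hg.trans (girth_B hconn hu h)
    norm_cast at this
    omega
  have hA : G.dist (c i) u = G.dist (c i) v + 1 → False := by omega
  have h1 : wt G t b (c i) u v = 1 := by
    rw [wt_pos ⟨by omega, by omega⟩]
    have : G.dist (c i) u / 2 = 0 := by omega
    rw [this, pow_zero]
  have : wt G t b (c i) u v ≤ Psi G t b c u v :=
    Finset.single_le_sum (f := fun i => wt G t b (c i) u v)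
      (fun i _ => wt_nonneg G t hb _ _ _) (Finset.mem_univ i)
  linarith

lemma main [Fintype V] {G : SimpleGraph V} [DecidableRel G.Adj]
    (hconn : G.Connected) {t : ℕ} (ht : 1 ≤ t)
    (hg : ((4 * t + 1 : ℕ) : ℕ∞) ≤ G.egirth) (hδ : 3 ≤ G.minDegree)
    {b : ℝ} (hbdef : b = ((G.minDegree : ℝ) - 1) * (t / (t + 1))) (hb : 1 ≤ b) {k : ℕ}
    (hk : k * (b⁻¹) ^ t < 1 / (t : ℝ)) : ¬ CopsWin G k := by
  classical
  have hne : Nonempty V := hconn.nonempty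
  have ht0 : (0 : ℝ) < t := by exact_mod_cast ht
  have stay : ∀ c : Fin k → V, ∀ i, c i = c i ∨ G.Adj (c i) (c i) := fun _ _ => Or.inl rfl
  have arith : ∀ M P : ℝ, 1 ≤ M → P ≤ M → (t / (t + 1) : ℝ) * (P + k * (b⁻¹) ^ t) < M := by
    intro M P hM hP
    have : P + k * (b⁻¹) ^ t < M * ((t + 1) / t) := by
      have e : M * ((t + 1) / t) = M + M * (1 / t) := by field_simp
      have : 1 / (t : ℝ) ≤ M * (1 / t) := le_mul_of_one_le_left (by positivity) hM
      linarith
    calc (t / (t + 1) : ℝ) * (P + k * (b⁻¹) ^ t) < (t / (t + 1) : ℝ) * (M * ((t + 1) / t)) :=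
          mul_lt_mul_of_pos_left this (by positivity)
      _ = M := by field_simp
  refine not_copsWin_of_inv
    (fun c v => ∃ p, G.Adj v p ∧ (∀ i, 2 ≤ G.dist (c i) v) ∧ Psi G t b c v p < 1) ?_ ?_ ?_ ?_
  · intro c
    let A := {a : V × V // G.Adj a.1 a.2}
    have hA : Nonempty A := by
      obtain ⟨v⟩ := hne
      have : 0 < G.degree v := by have := G.minDegree_le_degree v; omega
      obtain ⟨w, hw⟩ := (G.degree_pos_iff_exists_adj v).1 this
      exact ⟨⟨(v, w), hw⟩⟩
    obtain ⟨⟨⟨v, p⟩, hvp⟩, hmin⟩ := Finite.exists_min (fun a : A => Psi G t b c a.1.1 a.1.2)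
    dsimp only at hmin hvp
    have hlt : Psi G t b c v p < 1 := by
      by_contra hcon
      push Not at hcon
      obtain ⟨u, hu, hle⟩ := step hconn ht hg hδ hbdef hb (stay c) hvp
      have h1 := hmin ⟨(u, v), hu.symm⟩
      have h2 := arith _ _ hcon le_rfl
      dsimp only at h1
      linarith
    have hcv : ∀ i, c i ≠ v := by
      intro i hi
      have h1 : wt G t b (c i) v p = 1 := by
        have e0 : G.dist (c i) v = 0 := by rw [hi, SimpleGraph.dist_self]
        have e1 : G.dist (c i) p = 1 := by rw [hi]; exact SimpleGraph.dist_eq_one_iff_adj.2 hvp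
        rw [wt_pos ⟨by omega, by omega⟩, e0]
        simp
      have : wt G t b (c i) v p ≤ Psi G t b c v p :=
        Finset.single_le_sum (f := fun i => wt G t b (c i) v p)
          (fun i _ => wt_nonneg G t hb _ _ _) (Finset.mem_univ i)
      linarith
    obtain ⟨u, hu, hle⟩ := step hconn ht hg hδ hbdef hb (stay c) hvp
    have hlt' := hle.trans_lt (arith 1 _ le_rfl hlt.le)
    exact ⟨u, v, hu.symm, far_of_Psi hconn ht hg hb hu hcv hlt', hlt'⟩
  · rintro c r ⟨p, hp, hfar, hlt⟩ i hi
    have := hfar i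
    rw [hi, SimpleGraph.dist_self] at this
    omega
  · rintro c c' r hc ⟨p, hp, hfar, hlt⟩ i hi
    have := hfar i
    rcases hc i with h | h
    · rw [← h, hi, SimpleGraph.dist_self] at this
      omega
    · rw [hi] at h
      rw [SimpleGraph.dist_eq_one_iff_adj.2 h] at this
      omega
  · rintro c c' r hc ⟨p, hp, hfar, hlt⟩
    have hcv : ∀ i, c' i ≠ r := by
      intro i hi
      have := hfar i
      rcases hc i with h | h
      · rw [← h, hi, SimpleGraph.dist_self] at this
        omega
      · rw [hi] at h
        rw [SimpleGraph.dist_eq_one_iff_adj.2 h] at this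
        omega
    obtain ⟨u, hu, hle⟩ := step hconn ht hg hδ hbdef hb hc hp
    have hlt' := hle.trans_lt (arith 1 _ le_rfl hlt.le)
    exact ⟨u, hu, r, hu.symm, far_of_Psi hconn ht hg hb hu hcv hlt', hlt'⟩

lemma not_copsWin_zero [Nonempty V] (G : SimpleGraph V) : ¬ CopsWin G 0 := by
  rintro ⟨CS, h⟩
  obtain ⟨n, ⟨i, _⟩ | ⟨i, _⟩⟩ := h ⟨fun _ => Classical.arbitrary V, fun _ r => r, fun _ _ => Or.inl rfl⟩
  · exact i.elim0
  · exact i.elim0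

end CopAux

/-- Every finite connected graph `G` with finite girth `g` and
minimum degree `δ` has cop number at least `(1/g) * (δ - 1) ^ ⌊(g-1)/4⌋`. -/
theorem copNumber_ge_of_girth_eq [Fintype V] (G : SimpleGraph V) [DecidableRel G.Adj]
    (hconn : G.Connected) (g : ℕ) (hgirth : G.egirth = (g : ℕ∞)) :
    (1 / (g : ℝ)) * ((G.minDegree : ℝ) - 1) ^ ((g - 1) / 4) ≤ (copNumber G : ℝ) := by
  have hne : Nonempty V := hconn.nonempty
  have hwin : CopsWin G (copNumber G) :=
    Nat.sInf_mem (s := {k | CopsWin G k}) ⟨_, CopAux.copsWin_card G⟩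
  generalize copNumber G = k at hwin
  have hk1 : 1 ≤ k := by
    rcases Nat.eq_zero_or_pos k with h | h
    · subst h; exact absurd hwin (CopAux.not_copsWin_zero G)
    · exact h
  have hk1' : (1 : ℝ) ≤ k := by exact_mod_cast hk1
  have hg3 : 3 ≤ g := by
    have := G.three_le_egirth
    rw [hgirth] at this
    exact_mod_cast this
  have hg3' : (3 : ℝ) ≤ g := by exact_mod_cast hg3
  have hginv : 1 / (g : ℝ) ≤ 1 := by
    rw [div_le_one (by linarith)]; linarith
  have hginv0 : 0 ≤ 1 / (g : ℝ) := by positivity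
  have small : ((G.minDegree : ℝ) - 1) ^ ((g - 1) / 4) ≤ 1 →
      (1 / (g : ℝ)) * ((G.minDegree : ℝ) - 1) ^ ((g - 1) / 4) ≤ (k : ℝ) := by
    intro h
    nlinarith
  set t := (g - 1) / 4 with htdef
  by_cases ht : t = 0
  · apply small; rw [ht, pow_zero]
  by_cases hδ : 3 ≤ G.minDegree
  · by_contra hcon
    push Not at hcon
    have ht1 : 1 ≤ t := Nat.one_le_iff_ne_zero.2 ht
    have ht0 : (1 : ℝ) ≤ t := by exact_mod_cast ht1
    have htg : 4 * t + 1 ≤ g := by omega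
    have htg' : 4 * (t : ℝ) + 1 ≤ g := by exact_mod_cast htg
    have hd : (3 : ℝ) ≤ G.minDegree := by exact_mod_cast hδ
    have hq : (2 : ℝ) ≤ (G.minDegree : ℝ) - 1 := by linarith
    have hb : 1 ≤ ((G.minDegree : ℝ) - 1) * (t / (t + 1)) := by
      have : (1 / 2 : ℝ) ≤ t / (t + 1) := by
        rw [div_le_div_iff₀ (by norm_num) (by linarith)]; linarith
      nlinarith
    refine CopAux.main hconn ht1 (by rw [hgirth]; exact_mod_cast htg) hδ rfl hb ?_ hwin
    generalize (G.minDegree : ℝ) - 1 = q at *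
    have hq0 : 0 < q := by linarith
    have he : (((t : ℝ) + 1) / t) ^ t ≤ 3 := by
      have h1 : ((t : ℝ) + 1) / t ≤ Real.exp (1 / t) := by
        have := Real.add_one_le_exp (1 / (t : ℝ))
        have e : ((t : ℝ) + 1) / t = 1 / t + 1 := by field_simp; ring
        rw [e]; exact this
      calc (((t : ℝ) + 1) / t) ^ t ≤ (Real.exp (1 / t)) ^ t :=
            pow_le_pow_left₀ (by positivity) h1 _
        _ = Real.exp 1 := by
            rw [← Real.exp_nat_mul]; congr 1; field_simp
        _ ≤ 3 := by have := Real.exp_one_lt_d9; linarith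
    have e2 : ((q * (t / (t + 1)))⁻¹) ^ t = (q ^ t)⁻¹ * (((t : ℝ) + 1) / t) ^ t := by
      rw [mul_inv, inv_div, mul_pow, inv_pow]
    rw [e2]
    have hqt : 0 < q ^ t := by positivity
    have h3 : (k : ℝ) * (q ^ t)⁻¹ < 1 / g := by
      rw [← div_eq_mul_inv, div_lt_iff₀ hqt]; exact hcon
    calc (k : ℝ) * ((q ^ t)⁻¹ * (((t : ℝ) + 1) / t) ^ t)
        = (k * (q ^ t)⁻¹) * (((t : ℝ) + 1) / t) ^ t := by ring
      _ ≤ (k * (q ^ t)⁻¹) * 3 := mul_le_mul_of_nonneg_left he (by positivity)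
      _ < (1 / g) * 3 := by linarith
      _ ≤ 1 / t := by
          rw [div_mul_eq_mul_div, div_le_div_iff₀ (by linarith) (by linarith)]
          linarith
  · apply small
    have hd : (G.minDegree : ℝ) ≤ 2 := by
      have : G.minDegree ≤ 2 := by omega
      exact_mod_cast this
    have hd0 : (0 : ℝ) ≤ G.minDegree := Nat.cast_nonneg _
    have : |(G.minDegree : ℝ) - 1| ≤ 1 := by rw [abs_le]; constructor <;> linarith
    calc ((G.minDegree : ℝ) - 1) ^ t ≤ |((G.minDegree : ℝ) - 1) ^ t| := le_abs_self _
      _ = |(G.minDegree : ℝ) - 1| ^ t := abs_pow _ _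
      _ ≤ 1 := pow_le_one₀ (abs_nonneg _) this
end

section
/- Let Δ ≥ 3 be an integer and let ε and γ be real numbers with 0 < ε ≤ Δ − 2 and 0 < γ ≤ (1/2)(1 − log_{Δ−1}(1+ε)). Then for every real δ > 0 there exists an integer n₀ such that every finite connected graph G of maximum degree at most Δ, of order n ≥ n₀, and with h_γ(G) ≥ ε satisfies c(G) ≤ n^{1 − (1/2)·log_{Δ−1}(1+ε) + δ}. -/
/-!
The game of cops and robbers on a (finite connected) simple graph `G`:
first the `k` cops choose starting vertices, then the robber chooses a starting
vertex (knowing the cops' positions); the players alternate turns (cops first),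
each cop may stay or move to an adjacent vertex, and the robber may stay or move
to an adjacent vertex.  The cops win if at some moment a cop occupies the same
vertex as the robber.  The cop number is the least `k` for which the cops have
a winning strategy.
-/

variable {V : Type*}

/-- The vertex boundary `∂S` of a vertex set `S`: vertices outside `S` having a
neighbor in `S`. -/
def vertexBoundary (G : SimpleGraph V) (S : Set V) : Set V :=
  {v | v ∉ S ∧ ∃ u ∈ S, G.Adj u v}

/-- The expansion parameter `h_γ(G)`: the minimum of `|∂S| / |S|` over nonempty
vertex sets `S` with `|S| ≤ n^(1-γ)`, where `n` is the order of `G`. -/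
noncomputable def hGamma [Fintype V] (G : SimpleGraph V) (γ : ℝ) : ℝ :=
  sInf {x : ℝ | ∃ S : Set V, S.Nonempty ∧
    (S.ncard : ℝ) ≤ (Fintype.card V : ℝ) ^ (1 - γ) ∧
    x = ((vertexBoundary G S).ncard : ℝ) / (S.ncard : ℝ)}


section CopsHelpers

open Finset

/-- Positions from which the cops force a capture in `t` rounds. -/
def WinIn (G : SimpleGraph V) (k : ℕ) : ℕ → (Fin k → V) → V → Prop
  | 0, c, x => ∃ i, c i = x
  | t + 1, c, x => WinIn G k t c x ∨ ∃ c' : Fin k → V, (∀ i, c' i = c i ∨ G.Adj (c i) (c' i)) ∧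
      ∀ x', (x' = x ∨ G.Adj x x') → WinIn G k t c' x'

open Classical in
theorem exists_move (G : SimpleGraph V) (k : ℕ) (c : Fin k → V) (x : V) :
    ∃ c' : Fin k → V, (∀ i, c' i = c i ∨ G.Adj (c i) (c' i)) ∧
      ∀ t, WinIn G k t c x → (∃ i, c i = x) ∨
        ∃ s, s < t ∧ ∀ x', (x' = x ∨ G.Adj x x') → WinIn G k s c' x' := by
  by_cases h : ∃ t, WinIn G k t c x
  · have h1 := Nat.find_spec h
    have h2 := fun t => @Nat.find_min' _ _ h t
    generalize Nat.find h = m at h1 h2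
    cases m with
    | zero => exact ⟨c, fun i => Or.inl rfl, fun t _ => Or.inl h1⟩
    | succ m =>
      rcases h1 with h1 | ⟨c', hc', hw⟩
      · exact absurd (h2 m h1) (by omega)
      · exact ⟨c', hc', fun t ht => Or.inr ⟨m, h2 t ht, hw⟩⟩
  · exact ⟨c, fun i => Or.inl rfl, fun t ht => absurd ⟨t, ht⟩ h⟩

theorem copsWin_of_winIn (G : SimpleGraph V) (k : ℕ) (c : Fin k → V) (t : ℕ)
    (h : ∀ x, WinIn G k t c x) : CopsWin G k := by
  choose mv hmv hmw using exists_move G k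
  refine ⟨⟨c, mv, hmv⟩, fun RS => ?_⟩
  set CS : CopStrategy G k := ⟨c, mv, hmv⟩
  have key : ∀ t n, WinIn G k t (play CS RS n).1 (play CS RS n).2 →
      ∃ m, ∃ i, (play CS RS m).1 i = (play CS RS m).2 := by
    intro t
    induction t using Nat.strong_induction_on with
    | _ t ih =>
      intro n hn
      rcases hmw _ _ t hn with h0 | ⟨s, hs, hw⟩
      · exact ⟨n, h0⟩
      · exact ih s hs (n + 1) (hw _ (RS.valid _ _))
  obtain ⟨m, hm⟩ := key t 0 (h _)
  exact ⟨m, Or.inl hm⟩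

theorem exists_step (G : SimpleGraph V) (hG : G.Connected) (a u : V) (t : ℕ)
    (h : G.dist a u ≤ t + 1) : ∃ b, (b = a ∨ G.Adj a b) ∧ G.dist b u ≤ t := by
  obtain ⟨p, hp⟩ := hG.exists_walk_length_eq_dist a u
  cases p with
  | nil => exact ⟨a, Or.inl rfl, by simp⟩
  | cons hadj q =>
    refine ⟨_, Or.inr hadj, ?_⟩
    have := SimpleGraph.dist_le q
    simp at hp
    omega

theorem dist_step (G : SimpleGraph V) (hG : G.Connected) (x x' u : V) (t : ℕ)
    (h : G.dist x' u ≤ t) (hx : x' = x ∨ G.Adj x x') : G.dist x u ≤ t + 1 := by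
  rcases hx with rfl | hx
  · omega
  · have h1 := hG.dist_triangle (u := x) (v := x') (w := u)
    have h2 := SimpleGraph.dist_eq_one_iff_adj.2 hx
    omega

theorem winIn_of_targets (G : SimpleGraph V) (hG : G.Connected) (k : ℕ) (g : Fin k → V) (t : ℕ) :
    ∀ (c : Fin k → V) (x : V),
      (∀ u, G.dist x u ≤ t → ∃ i, g i = u ∧ G.dist (c i) u ≤ t) → WinIn G k t c x := by
  induction t with
  | zero =>
    intro c x h
    obtain ⟨i, hi, hd⟩ := h x (by simp)
    refine ⟨i, ?_⟩
    have : G.dist (c i) x = 0 := by omega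
    exact (hG.dist_eq_zero_iff).1 this
  | succ t ih =>
    intro c x h
    have hs : ∀ i, ∃ b, (b = c i ∨ G.Adj (c i) b) ∧
        (G.dist (c i) (g i) ≤ t + 1 → G.dist b (g i) ≤ t) := by
      intro i
      by_cases hd : G.dist (c i) (g i) ≤ t + 1
      · obtain ⟨b, hb, hb2⟩ := exists_step G hG _ _ _ hd
        exact ⟨b, hb, fun _ => hb2⟩
      · exact ⟨c i, Or.inl rfl, fun h => absurd h hd⟩
    choose c' hc' hd' using hs
    refine Or.inr ⟨c', hc', fun x' hx' => ih c' x' ?_⟩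
    intro u hu
    obtain ⟨i, hi, hd⟩ := h u (dist_step G hG x x' u t hu hx')
    exact ⟨i, hi, by subst hi; exact hd' i hd⟩

/-- The ball of radius `r` around a set. -/
noncomputable def setBall [Fintype V] (G : SimpleGraph V) (r : ℕ) (S : Finset V) : Finset V :=
  open Classical in univ.filter (fun w => ∃ u ∈ S, G.dist u w ≤ r)

theorem mem_setBall [Fintype V] (G : SimpleGraph V) (r : ℕ) (S : Finset V) (w : V) :
    w ∈ setBall G r S ↔ ∃ u ∈ S, G.dist u w ≤ r := by
  simp [setBall]

open Classical in
theorem copsWin_of_hall [Fintype V] (G : SimpleGraph V) (hG : G.Connected) (k r : ℕ)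
    (ω : Fin k → V)
    (h : ∀ (x : V) (S : Finset V), S ⊆ setBall G r {x} →
      S.card ≤ (univ.filter (fun i => ω i ∈ setBall G r S)).card) :
    CopsWin G k := by
  apply copsWin_of_winIn G k ω r
  intro x
  let B := setBall G r {x}
  have hall : ∃ f : B → Fin k, Function.Injective f ∧
      ∀ u : B, f u ∈ (univ.filter (fun i => ω i ∈ setBall G r {u.1})) := by
    rw [← Finset.all_card_le_biUnion_card_iff_exists_injective]
    intro S
    have := h x (S.map (Function.Embedding.subtype _)) (by
      intro y hy
      simp only [Finset.mem_map] at hy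
      obtain ⟨z, _, rfl⟩ := hy
      exact z.2)
    rw [Finset.card_map] at this
    refine this.trans (Finset.card_le_card ?_)
    intro i hi
    simp only [mem_filter, mem_univ, true_and, mem_setBall, Finset.mem_map, mem_biUnion] at hi ⊢
    obtain ⟨u, ⟨z, hz, rfl⟩, hd⟩ := hi
    exact ⟨z, hz, _, by simp, hd⟩
  obtain ⟨f, hf, hfd⟩ := hall
  let g : Fin k → V := fun i => if h : ∃ u : B, f u = i then (h.choose : V) else x
  apply winIn_of_targets G hG k g r
  intro u hu
  have huB : u ∈ B := by simp only [B, mem_setBall]; exact ⟨x, by simp, hu⟩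
  refine ⟨f ⟨u, huB⟩, ?_, ?_⟩
  · have hex : ∃ u' : B, f u' = f ⟨u, huB⟩ := ⟨_, rfl⟩
    simp only [g, dif_pos hex]
    rw [hf hex.choose_spec]
  · have := hfd ⟨u, huB⟩
    simp only [mem_filter, mem_univ, true_and, mem_setBall, mem_singleton] at this
    obtain ⟨_, rfl, h2⟩ := this
    rw [SimpleGraph.dist_comm]; exact h2

open Classical in
/-- Probabilistic placement. -/
theorem exists_placement [Fintype V] [Nonempty V] (k : ℕ) (N : Finset V → Finset V)
    (P : Finset V → Prop)
    (h : ∀ S : Finset V, S.Nonempty → P S →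
      2 * (Fintype.card V : ℝ) * (S.card * Real.log (4 * Fintype.card V)) ≤ k * (N S).card) :
    ∃ ω : Fin k → V, ∀ S, P S → S.card ≤ (univ.filter (fun i => ω i ∈ N S)).card := by
  by_contra hcon
  push Not at hcon
  set n : ℝ := (Fintype.card V : ℝ) with hn
  have hn0 : 0 < n := by rw [hn]; exact_mod_cast Fintype.card_pos
  have hn1 : 1 ≤ n := by rw [hn]; exact_mod_cast Fintype.card_pos
  let w : Finset V → (Fin k → V) → ℝ := fun S ω => ∏ i, (if ω i ∈ N S then (1/2 : ℝ) else 1)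
  have hw0 : ∀ S ω, 0 ≤ w S ω := fun S ω => prod_nonneg fun i _ => by split_ifs <;> norm_num
  have hw : ∀ S ω, w S ω = (1/2 : ℝ) ^ (univ.filter (fun i => ω i ∈ N S)).card := by
    intro S ω
    simp only [w]
    rw [Finset.prod_ite]; simp
  let F : Finset (Finset V) := univ.filter (fun S => S.Nonempty ∧ P S)
  have hlow : ∀ ω : Fin k → V, (1 : ℝ) ≤ ∑ S ∈ F, 2 ^ S.card * w S ω := by
    intro ω
    obtain ⟨S, hP, hS⟩ := hcon ω
    have hSF : S ∈ F := by
      simp only [F, mem_filter, mem_univ, true_and]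
      refine ⟨?_, hP⟩
      rw [← Finset.card_pos]; omega
    refine le_trans ?_ (Finset.single_le_sum (f := fun S => 2 ^ S.card * w S ω)
      (fun S _ => mul_nonneg (by positivity) (hw0 S ω)) hSF)
    show (1 : ℝ) ≤ 2 ^ S.card * w S ω
    rw [hw]
    calc (1 : ℝ) = 2 ^ S.card * (1/2) ^ S.card := by rw [← mul_pow]; norm_num
      _ ≤ _ := by
        gcongr ?_ * ?_
        exact pow_le_pow_of_le_one (by norm_num) (by norm_num) hS.le
  have hsumw : ∀ S ∈ F, ∑ ω, w S ω ≤ n ^ k * (1 / (4 * n)) ^ S.card := by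
    intro S hSF
    simp only [F, mem_filter, mem_univ, true_and] at hSF
    have hb := h S hSF.1 hSF.2
    have e1 : ∑ ω, w S ω = (∑ v, (if v ∈ N S then (1/2 : ℝ) else 1)) ^ k :=
      (Fintype.sum_pow (fun v => (if v ∈ N S then (1/2 : ℝ) else 1)) k).symm
    have e2 : ∑ v, (if v ∈ N S then (1/2 : ℝ) else 1) = n - (N S).card / 2 := by
      have : ∀ v, (if v ∈ N S then (1/2 : ℝ) else 1) = 1 - (if v ∈ N S then (1/2 : ℝ) else 0) := by
        intro v; split_ifs <;> norm_num
      simp_rw [this]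
      rw [Finset.sum_sub_distrib, Finset.sum_ite_mem]
      simp [hn]; ring
    have e3 : n - (N S).card / 2 ≤ n * Real.exp (-((N S).card / (2 * n))) := by
      have := Real.add_one_le_exp (-((N S).card / (2 * n)))
      have h2 := mul_le_mul_of_nonneg_left this hn0.le
      refine le_trans (le_of_eq ?_) h2
      field_simp
      ring
    have e0 : 0 ≤ n - (N S).card / 2 := by
      rw [← e2]; exact sum_nonneg fun v _ => by split_ifs <;> norm_num
    rw [e1, e2]
    refine (pow_le_pow_left₀ e0 e3 k).trans ?_
    rw [mul_pow]
    gcongr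
    rw [← Real.exp_nat_mul]
    have e4 : (1 / (4 * n)) ^ S.card = Real.exp (-(S.card * Real.log (4 * n))) := by
      rw [Real.exp_neg, Real.exp_nat_mul, Real.exp_log (by positivity)]
      rw [one_div, inv_pow]
    rw [e4, Real.exp_le_exp]
    have : (S.card * Real.log (4 * n)) ≤ k * ((N S).card / (2 * n)) := by
      rw [← mul_div_assoc, le_div_iff₀ (by positivity)]
      linarith
    linarith
  have htot : (n : ℝ) ^ k ≤ ∑ S ∈ F, 2 ^ S.card * (n ^ k * (1 / (4 * n)) ^ S.card) := by
    calc n ^ k = ∑ ω : Fin k → V, (1 : ℝ) := by simp [hn]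
      _ ≤ ∑ ω : Fin k → V, ∑ S ∈ F, 2 ^ S.card * w S ω := sum_le_sum fun ω _ => hlow ω
      _ = ∑ S ∈ F, 2 ^ S.card * ∑ ω, w S ω := by
        rw [Finset.sum_comm]; simp_rw [Finset.mul_sum]
      _ ≤ _ := sum_le_sum fun S hS => mul_le_mul_of_nonneg_left (hsumw S hS) (by positivity)
  have hF : ∑ S ∈ F, 2 ^ S.card * (n ^ k * (1 / (4 * n)) ^ S.card)
      = n ^ k * ∑ S ∈ F, (1 / (2 * n)) ^ S.card := by
    rw [Finset.mul_sum]
    refine sum_congr rfl fun S _ => ?_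
    rw [show (1 / (2 * n)) = 2 * (1 / (4 * n)) by field_simp; norm_num, mul_pow]; ring
  rw [hF] at htot
  have h1 : 1 ≤ ∑ S ∈ F, (1 / (2 * n)) ^ S.card := by
    by_contra hlt
    push Not at hlt
    have := mul_lt_mul_of_pos_left hlt (pow_pos hn0 k)
    linarith
  have h2 : 1 + ∑ S ∈ F, (1 / (2 * n)) ^ S.card ≤ (1 + 1 / (2 * n)) ^ (Fintype.card V) := by
    have e : (1 + 1 / (2 * n)) ^ (Fintype.card V) = ∑ S : Finset V, (1 / (2 * n)) ^ S.card := by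
      have := Finset.sum_pow_mul_eq_add_pow (1 / (2 * n)) (1 : ℝ) (univ : Finset V)
      rw [add_comm, ← Finset.card_univ, ← this]
      simp
    rw [e]
    have hne : (∅ : Finset V) ∉ F := by simp [F]
    have := Finset.sum_insert (f := fun S : Finset V => (1 / (2 * n)) ^ S.card) hne
    simp only [card_empty, pow_zero] at this
    rw [← this]
    exact sum_le_sum_of_subset_of_nonneg (subset_univ _) fun _ _ _ => by positivity
  have h3 : (1 + 1 / (2 * n)) ^ (Fintype.card V) ≤ Real.exp (1 / 2) := by
    have := Real.add_one_le_exp (1 / (2 * n))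
    rw [add_comm]
    refine (pow_le_pow_left₀ (by positivity) this _).trans ?_
    rw [← Real.exp_nat_mul, ← hn]
    apply le_of_eq; congr 1; field_simp
  have h4 : Real.exp (1 / 2) < 2 := by
    have h5 : Real.exp (1/2) * Real.exp (1/2) = Real.exp 1 := by
      rw [← Real.exp_add]; norm_num
    have := Real.exp_one_lt_d9
    nlinarith [Real.exp_pos (1/2 : ℝ)]
  linarith

open Classical in
theorem setBall_lower [Fintype V] (G : SimpleGraph V) (hG : G.Connected) (ε γ : ℝ) (hε0 : 0 < ε)
    (hh : ε ≤ hGamma G γ) (S : Finset V) (hS : S.Nonempty) (r : ℕ) :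
    min ((1 + ε) ^ r * S.card) ((Fintype.card V : ℝ) ^ (1 - γ)) ≤ (setBall G r S).card := by
  have hsub : ∀ r, S ⊆ setBall G r S := fun r u hu => by
    rw [mem_setBall]; exact ⟨u, hu, by simp⟩
  induction r with
  | zero =>
    refine (min_le_left _ _).trans ?_
    simp only [pow_zero, one_mul]
    exact_mod_cast card_le_card (hsub 0)
  | succ r ih =>
    have hmono : setBall G r S ⊆ setBall G (r + 1) S := by
      intro w; simp only [mem_setBall]
      rintro ⟨u, hu, hd⟩; exact ⟨u, hu, by omega⟩
    have hmono' : ((setBall G r S).card : ℝ) ≤ (setBall G (r + 1) S).card := by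
      exact_mod_cast card_le_card hmono
    by_cases hbig : ((setBall G r S).card : ℝ) ≤ (Fintype.card V : ℝ) ^ (1 - γ)
    · have hle : ε ≤ ((vertexBoundary G (setBall G r S : Set V)).ncard : ℝ) /
          ((setBall G r S : Set V).ncard : ℝ) := by
        refine hh.trans (csInf_le ⟨0, ?_⟩ ⟨_, ?_, ?_, rfl⟩)
        · rintro x ⟨T, _, _, rfl⟩; positivity
        · exact_mod_cast hS.mono (hsub r)
        · rw [Set.ncard_coe_finset]; exact hbig
      rw [Set.ncard_coe_finset] at hle
      have hpos : (0 : ℝ) < (setBall G r S).card := by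
        exact_mod_cast Finset.card_pos.2 (hS.mono (hsub r))
      rw [le_div_iff₀ hpos] at hle
      have hcard : (setBall G r S).card + (vertexBoundary G (setBall G r S : Set V)).ncard
          ≤ (setBall G (r + 1) S).card := by
        rw [← Set.ncard_coe_finset, ← Set.ncard_coe_finset,
          ← Set.ncard_union_eq (by
            rw [Set.disjoint_left]; intro a ha hb; exact hb.1 ha) (Set.toFinite _) (Set.toFinite _)]
        apply Set.ncard_le_ncard _ (Set.toFinite _)
        rintro w (hw | ⟨hw, u, hu, hadj⟩)
        · exact hmono hw
        · simp only [mem_coe, mem_setBall] at hu ⊢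
          obtain ⟨z, hz, hd⟩ := hu
          refine ⟨z, hz, ?_⟩
          rw [SimpleGraph.dist_comm] at hd ⊢
          exact dist_step G hG w u z r hd (Or.inr hadj.symm)
      have hcard' : ((setBall G r S).card : ℝ) +
          (vertexBoundary G (setBall G r S : Set V)).ncard ≤ (setBall G (r + 1) S).card := by
        exact_mod_cast hcard
      rcases min_le_iff.1 ih with h1 | h1
      · refine (min_le_left _ _).trans ?_
        rw [pow_succ]
        nlinarith
      · exact (min_le_right _ _).trans (h1.trans hmono')
    · exact (min_le_right _ _).trans ((not_le.1 hbig).le.trans hmono')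

open Classical in
theorem ball_upper [Fintype V] (G : SimpleGraph V) (hG : G.Connected) (Δ : ℕ) (hΔ : 3 ≤ Δ)
    (hdeg : ∀ v : V, (G.neighborSet v).ncard ≤ Δ) (x : V) (r : ℕ) :
    (setBall G r {x}).card ≤ 3 * (Δ - 1) ^ r := by
  let s : ℕ → Finset V := fun j => univ.filter (fun w => G.dist x w = j)
  let nb : V → Finset V := fun u => univ.filter (fun w => G.Adj u w)
  have hnb : ∀ u, (nb u).card ≤ Δ := by
    intro u
    have := hdeg u
    rw [← Set.ncard_coe_finset]
    convert this using 2
    ext w; simp [nb]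
  have hpred : ∀ j w, G.dist x w = j + 1 → ∃ u, G.Adj u w ∧ G.dist x u = j := by
    intro j w hw
    obtain ⟨b, hb, hd⟩ := exists_step G hG w x j (by rw [SimpleGraph.dist_comm]; omega)
    have h1 := dist_step G hG w b x _ le_rfl hb
    rw [SimpleGraph.dist_comm] at h1
    rcases hb with rfl | hb
    · rw [SimpleGraph.dist_comm] at hd; omega
    · refine ⟨b, hb.symm, ?_⟩
      rw [SimpleGraph.dist_comm]; omega
  have s0 : (s 0).card = 1 := by
    rw [Finset.card_eq_one]
    refine ⟨x, ?_⟩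
    ext w; simp only [s, mem_filter, mem_univ, true_and, mem_singleton, hG.dist_eq_zero_iff]; exact eq_comm
  have s1 : (s 1).card ≤ Δ := by
    refine (card_le_card ?_).trans (hnb x)
    intro w hw
    simpa [s, nb] using hw
  have ss : ∀ j, (s (j + 2)).card ≤ (s (j + 1)).card * (Δ - 1) := by
    intro j
    have : s (j + 2) ⊆ (s (j + 1)).biUnion (fun u => (nb u).filter (fun w => G.dist x w = j + 2)) := by
      intro w hw
      simp only [s, nb, mem_filter, mem_univ, true_and, mem_biUnion] at hw ⊢
      obtain ⟨u, hu, hd⟩ := hpred _ _ hw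
      exact ⟨u, hd, hu, hw⟩
    refine (card_le_card this).trans (card_biUnion_le_card_mul _ _ _ ?_)
    intro u hu
    simp only [s, mem_filter, mem_univ, true_and] at hu
    obtain ⟨p, hp, hpd⟩ := hpred _ _ hu
    have hlt : ((nb u).filter (fun w => G.dist x w = j + 2)).card < (nb u).card := by
      apply card_lt_card
      rw [Finset.filter_ssubset]
      exact ⟨p, by simp [nb, hp.symm], by omega⟩
    have := hnb u
    omega
  obtain ⟨d, rfl⟩ : ∃ d, Δ = d + 3 := ⟨Δ - 3, by omega⟩
  have hsr : ∀ j, (s (j + 1)).card ≤ (d + 3) * (d + 2) ^ j := by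
    intro j
    induction j with
    | zero => simpa using s1
    | succ j ih =>
      refine (ss j).trans ?_
      rw [pow_succ, ← mul_assoc]
      exact Nat.mul_le_mul ih (by omega)
  have hb : ∀ r, (setBall G r {x}).card + 2 ≤ 3 * (d + 2) ^ r := by
    intro r
    induction r with
    | zero =>
      have : setBall G 0 {x} = s 0 := by
        ext w; simp [mem_setBall, s]
      rw [this, s0]; simp
    | succ r ih =>
      have : setBall G (r + 1) {x} ⊆ setBall G r {x} ∪ s (r + 1) := by
        intro w; simp only [mem_setBall, s, mem_union, mem_filter, mem_univ, true_and, mem_singleton]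
        rintro ⟨u, rfl, hd⟩
        by_cases h : G.dist u w ≤ r
        · exact Or.inl ⟨u, rfl, h⟩
        · exact Or.inr (by omega)
      have h1 := (card_le_card this).trans (card_union_le _ _)
      have h2 := hsr r
      have h3 : 3 * (d + 2) ^ (r + 1) = 3 * (d + 2) ^ r + (3 * d + 3) * (d + 2) ^ r := by ring
      have h4 : (d + 3) * (d + 2) ^ r ≤ (3 * d + 3) * (d + 2) ^ r := Nat.mul_le_mul (by omega) le_rfl
      omega
  have := hb r
  have e : d + 3 - 1 = d + 2 := by omega
  rw [e]; omega

end CopsHelpers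

/-- Let `Δ ≥ 3`, `0 < ε ≤ Δ - 2` and
`0 < γ ≤ (1/2)(1 - log_{Δ-1}(1+ε))`.  Then for every `δ > 0` there is `n₀` such
that every finite connected graph `G` with maximum degree at most `Δ`, order
`n ≥ n₀`, and `h_γ(G) ≥ ε` satisfies
`c(G) ≤ n ^ (1 - (1/2) log_{Δ-1}(1+ε) + δ)`. -/
theorem copNumber_le_of_hGamma (Δ : ℕ) (hΔ : 3 ≤ Δ) (ε γ : ℝ)
    (hε0 : 0 < ε) (hεΔ : ε ≤ (Δ : ℝ) - 2)
    (hγ0 : 0 < γ) (hγ : γ ≤ (1 / 2) * (1 - Real.logb ((Δ : ℝ) - 1) (1 + ε))) :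
    ∀ δ : ℝ, 0 < δ → ∃ n₀ : ℕ, ∀ (W : Type) [Fintype W] (G : SimpleGraph W),
      G.Connected → (∀ v : W, (G.neighborSet v).ncard ≤ Δ) →
      n₀ ≤ Fintype.card W → ε ≤ hGamma G γ →
      (copNumber G : ℝ) ≤
        (Fintype.card W : ℝ) ^ (1 - (1 / 2) * Real.logb ((Δ : ℝ) - 1) (1 + ε) + δ) := by
  intro δ hδ
  set D : ℝ := (Δ : ℝ) - 1 with hD
  have hΔ' : (3 : ℝ) ≤ Δ := by exact_mod_cast hΔ
  have hD2 : 2 ≤ D := by linarith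
  set a : ℝ := Real.logb D (1 + ε) with ha
  have hDa : D ^ a = 1 + ε := Real.rpow_logb (by linarith) (by linarith) (by linarith)
  have ha0 : 0 < a := Real.logb_pos (by linarith) (by linarith)
  have ha1 : a < 1 := by linarith
  set K : ℝ := 12 + 4 * (1 + ε) with hK
  have hK0 : 0 < K := by linarith
  have hev : ∃ n₀ : ℕ, ∀ n : ℕ, n₀ ≤ n → K * Real.log (4 * n) ≤ (n : ℝ) ^ δ := by
    have h1 := (isLittleO_log_rpow_atTop hδ).bound (c := 1 / (K * 4 ^ δ)) (by positivity)
    obtain ⟨Y, hY⟩ := Filter.eventually_atTop.1 h1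
    refine ⟨⌈max Y 1⌉₊, fun n hn => ?_⟩
    have hn' : max Y 1 ≤ (n : ℝ) := (Nat.le_ceil _).trans (by exact_mod_cast hn)
    have hnY : Y ≤ n := (le_max_left _ _).trans hn'
    have hn1 : (1 : ℝ) ≤ n := (le_max_right _ _).trans hn'
    have h2 := hY (4 * n) (by linarith)
    rw [Real.norm_eq_abs, Real.norm_eq_abs, abs_of_nonneg (Real.log_nonneg (by linarith)),
      abs_of_nonneg (by positivity), Real.mul_rpow (by norm_num) (by linarith)] at h2
    calc K * Real.log (4 * n) ≤ K * (1 / (K * 4 ^ δ) * (4 ^ δ * (n : ℝ) ^ δ)) := by gcongr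
      _ = (n : ℝ) ^ δ := by
        have : (4 : ℝ) ^ δ ≠ 0 := by positivity
        field_simp
  obtain ⟨n₀, hn₀⟩ := hev
  refine ⟨n₀, fun W _ G hG hdeg hcard hh => ?_⟩
  classical
  haveI : Nonempty W := hG.nonempty
  have hlog := hn₀ _ hcard
  have hn1 : (1 : ℝ) ≤ (Fintype.card W : ℝ) := by exact_mod_cast Fintype.card_pos
  have hlow := fun S hS r => setBall_lower G hG ε γ hε0 hh S hS r
  have hplace := fun k => exists_placement (V := W) k
  set n : ℝ := (Fintype.card W : ℝ) with hn
  have hn0 : 0 < n := by linarith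
  set X : ℝ := n ^ (1 - 1 / 2 * a + δ) with hX
  have hX1 : 1 ≤ X := Real.one_le_rpow hn1 (by linarith)
  set k : ℕ := ⌊X⌋₊ with hk
  have hkX : (k : ℝ) ≤ X := Nat.floor_le (by linarith)
  have hkX2 : X / 2 ≤ k := by
    have h1 : X < k + 1 := Nat.lt_floor_add_one X
    have h2 : (1 : ℝ) ≤ k := by exact_mod_cast Nat.le_floor (by simpa using hX1)
    linarith
  refine le_trans ?_ hkX
  have hL0 : 0 ≤ Real.log (4 * n) := Real.log_nonneg (by linarith)
  -- radius
  have hlb0 : 0 ≤ Real.logb D n / 2 := div_nonneg (Real.logb_nonneg (by linarith) hn1) (by norm_num)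
  set r : ℕ := ⌊Real.logb D n / 2⌋₊ with hr
  have hr1 : (r : ℝ) ≤ Real.logb D n / 2 := Nat.floor_le hlb0
  have hr2 : Real.logb D n / 2 - 1 ≤ r := by
    have := Nat.lt_floor_add_one (Real.logb D n / 2)
    rw [← hr] at this; linarith
  have hDn : D ^ Real.logb D n = n := Real.rpow_logb (by linarith) (by linarith) hn0
  have hDr : D ^ r ≤ n ^ (1 / 2 : ℝ) := by
    rw [← Real.rpow_natCast]
    refine (Real.rpow_le_rpow_of_exponent_le (by linarith) hr1).trans (le_of_eq ?_)
    rw [div_eq_mul_one_div, Real.rpow_mul (by linarith), hDn]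
  have hεr : n ^ (1 / 2 * a) ≤ (1 + ε) * (1 + ε) ^ r := by
    rw [← hDa, ← Real.rpow_natCast, ← Real.rpow_mul (by linarith), ← Real.rpow_add (by linarith)]
    nth_rewrite 1 [← hDn]
    rw [← Real.rpow_mul (by linarith)]
    apply Real.rpow_le_rpow_of_exponent_le (by linarith)
    nlinarith
  have hball : ∀ x : W, ((setBall G r {x}).card : ℝ) ≤ 3 * n ^ (1 / 2 : ℝ) := by
    intro x
    have h1 := ball_upper G hG Δ hΔ hdeg x r
    have h2 : ((setBall G r {x}).card : ℝ) ≤ ((3 * (Δ - 1) ^ r : ℕ) : ℝ) := by exact_mod_cast h1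
    rw [Nat.cast_mul, Nat.cast_pow, Nat.cast_sub (by omega)] at h2
    push_cast at h2
    rw [← hD] at h2
    linarith
  obtain ⟨ω, hω⟩ := hplace k (setBall G r) (fun S => (S.card : ℝ) ≤ 3 * n ^ (1 / 2 : ℝ)) (by
    intro S hS hP
    refine le_trans ?_ (mul_le_mul_of_nonneg_left (hlow S hS r) (Nat.cast_nonneg k))
    refine le_trans ?_ (mul_le_mul_of_nonneg_right hkX2 (by positivity))
    have hX0 : 0 ≤ X / 2 := by linarith
    have hs0 : (0 : ℝ) ≤ S.card := Nat.cast_nonneg _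
    rw [mul_min_of_nonneg _ _ hX0, le_min_iff]
    constructor
    · have h1 : X * n ^ (1 / 2 * a) = n * n ^ δ := by
        rw [hX, ← Real.rpow_add hn0]
        nth_rewrite 2 [← Real.rpow_one n]
        rw [← Real.rpow_add hn0]
        congr 1; ring
      have h2 : n * n ^ δ ≤ X * ((1 + ε) * (1 + ε) ^ r) := by
        rw [← h1]; gcongr
      have h3 : 4 * (1 + ε) * Real.log (4 * n) ≤ n ^ δ := by
        refine le_trans ?_ hlog
        gcongr; linarith
      have h4 : n * (4 * (1 + ε) * Real.log (4 * n)) ≤ X * ((1 + ε) * (1 + ε) ^ r) :=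
        (mul_le_mul_of_nonneg_left h3 hn0.le).trans h2
      have h5 : n * (4 * Real.log (4 * n)) ≤ X * (1 + ε) ^ r := by
        have : (0 : ℝ) < 1 + ε := by linarith
        refine le_of_mul_le_mul_left ?_ this
        linarith
      have h6 := mul_le_mul_of_nonneg_right h5 hs0
      linarith
    · have h1 : n * n ^ (1 / 2 : ℝ) * n ^ δ ≤ X * n ^ (1 - γ) := by
        rw [hX, ← Real.rpow_add hn0]
        nth_rewrite 1 [← Real.rpow_one n]
        rw [← Real.rpow_add hn0, ← Real.rpow_add hn0]
        apply Real.rpow_le_rpow_of_exponent_le hn1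
        linarith
      have h3 : 12 * Real.log (4 * n) ≤ n ^ δ := by
        refine le_trans ?_ hlog
        gcongr; linarith
      have h4 : n * n ^ (1 / 2 : ℝ) * (12 * Real.log (4 * n)) ≤ X * n ^ (1 - γ) :=
        (mul_le_mul_of_nonneg_left h3 (by positivity)).trans h1
      have h5 := mul_le_mul_of_nonneg_left hP (mul_nonneg hn0.le hL0)
      linarith)
  have hwin : CopsWin G k := by
    refine copsWin_of_hall G hG k r ω fun x S hS => ?_
    convert hω S (le_trans (by exact_mod_cast Finset.card_le_card hS) (hball x)) using 3
  exact_mod_cast Nat.sInf_le hwin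
end

section
/- Let t ≥ 1 be an integer and let G be a finite digraph that is t-dispersed. Then for all vertices v and x with dist(v,x) ≤ t, there is a unique geodesic directed path from v to x. -/
variable {V : Type*}

/-- `IsDiwalk G a b P` says that `P : Fin (m+1) → V` is a directed walk in the
digraph `G` from `a` to `b` (with `m` edges). -/
def IsDiwalk (G : V → V → Prop) (a b : V) {m : ℕ} (P : Fin (m + 1) → V) : Prop :=
  P 0 = a ∧ P (Fin.last m) = b ∧ ∀ i : Fin m, G (P i.castSucc) (P i.succ)

/-- The distance `dist(a, b)` in a digraph: the length of a shortest directed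
path from `a` to `b` (`⊤` if there is none). -/
noncomputable def ddist (G : V → V → Prop) (a b : V) : ℕ∞ :=
  sInf {n : ℕ∞ | ∃ (m : ℕ) (P : Fin (m + 1) → V), n = (m : ℕ∞) ∧ IsDiwalk G a b P}

/-- A `(v, u)`-trap in a digraph `G`: two internally disjoint geodesic directed
paths, a `(v, x)`-path `P` with at least one edge and a `(u, x)`-path `Q` with
`‖Q‖ ≤ ‖P‖`; if `u = v` both paths must have at least two edges.  The vertex
`x` is the tip and `‖P‖` is the length of the trap. -/
structure Trap (G : V → V → Prop) (v u : V) where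
  /-- the length of the trap, i.e. the number of edges of `P` -/
  lenP : ℕ
  /-- the number of edges of `Q` -/
  lenQ : ℕ
  /-- the tip of the trap -/
  x : V
  P : Fin (lenP + 1) → V
  Q : Fin (lenQ + 1) → V
  one_le_lenP : 1 ≤ lenP
  lenQ_le : lenQ ≤ lenP
  hPinj : Function.Injective P
  hQinj : Function.Injective Q
  hP : IsDiwalk G v x P
  hQ : IsDiwalk G u x Q
  hPgeo : ddist G v x = (lenP : ℕ∞)
  hQgeo : ddist G u x = (lenQ : ℕ∞)
  disj : ∀ (i : Fin (lenP + 1)) (j : Fin (lenQ + 1)), P i = Q j →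
    (i = 0 ∨ i = Fin.last lenP) ∧ (j = 0 ∨ j = Fin.last lenQ)
  eq_case : u = v → 2 ≤ lenP ∧ 2 ≤ lenQ

/-- The vertex set of a trap. -/
def Trap.verts {G : V → V → Prop} {v u : V} (T : Trap G v u) : Set V :=
  Set.range T.P ∪ Set.range T.Q

/-- The (directed) edge set of a trap. -/
def Trap.edges {G : V → V → Prop} {v u : V} (T : Trap G v u) : Set (V × V) :=
  (Set.range fun i : Fin T.lenP => (T.P i.castSucc, T.P i.succ)) ∪
  (Set.range fun i : Fin T.lenQ => (T.Q i.castSucc, T.Q i.succ))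

/-- Two `(v, u)`-traps are internally disjoint if they share no vertices apart
from `v` and `u`, and share no edges. -/
def Trap.InternallyDisjoint {G : V → V → Prop} {v u : V} (T₁ T₂ : Trap G v u) : Prop :=
  T₁.verts ∩ T₂.verts ⊆ {v, u} ∧ Disjoint T₁.edges T₂.edges

/-- The trap distance `ρ*(v, u)`: the minimum length of a `(v, u)`-trap
(`⊤` if there is none). -/
noncomputable def trapDist (G : V → V → Prop) (v u : V) : ℕ∞ :=
  sInf {n : ℕ∞ | ∃ T : Trap G v u, n = (T.lenP : ℕ∞)}

/-- A digraph `G` is `t`-dispersed if (1) for all distinct vertices `v, u`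
there are no two internally disjoint `(v, u)`-traps each of length at most `t`,
and (2) whenever `uv` is an edge of `G` there is no `(v, u)`-trap of length at
most `t`. -/
def Dispersed (G : V → V → Prop) (t : ℕ) : Prop :=
  (∀ v u : V, v ≠ u → ¬∃ T₁ T₂ : Trap G v u,
      T₁.lenP ≤ t ∧ T₂.lenP ≤ t ∧ T₁.InternallyDisjoint T₂) ∧
  (∀ u v : V, G u v → ¬∃ T : Trap G v u, T.lenP ≤ t)

/-- walks indexed by natural numbers -/
def NWalk (G : V → V → Prop) (n : ℕ) (f : ℕ → V) : Prop := ∀ i < n, G (f i) (f (i + 1))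

/-- there is a walk with `n` edges -/
def NReach (G : V → V → Prop) (n : ℕ) (a b : V) : Prop :=
  ∃ f : ℕ → V, f 0 = a ∧ f n = b ∧ NWalk G n f

/-- geodesic walks indexed by natural numbers -/
def NGeo (G : V → V → Prop) (n : ℕ) (f : ℕ → V) : Prop :=
  NWalk G n f ∧ ∀ k, NReach G k (f 0) (f n) → n ≤ k

theorem NReach.trans {G : V → V → Prop} {m n : ℕ} {a b c : V}
    (h₁ : NReach G m a b) (h₂ : NReach G n b c) : NReach G (m + n) a c := by
  obtain ⟨f, f0, fm, hf⟩ := h₁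
  obtain ⟨g, g0, gn, hg⟩ := h₂
  refine ⟨fun i => if i < m then f i else g (i - m), ?_, ?_, ?_⟩
  · by_cases h : 0 < m
    · simp [h, f0]
    · have : m = 0 := by omega
      subst this
      simp [g0, ← fm, f0]
  · simp [gn]
  · intro i hi
    by_cases h : i < m
    · by_cases h' : i + 1 < m
      · simpa [h, h'] using hf i h
      · have e : i + 1 = m := by omega
        have := hf i h
        rw [e, fm, ← g0] at this
        simpa [h, h', e] using this
    · have h' : ¬ i + 1 < m := by omega
      have := hg (i - m) (by omega)
      have e : i + 1 - m = i - m + 1 := by omega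
      simpa [h, h', e] using this

theorem NWalk.reach {G : V → V → Prop} {n : ℕ} {f : ℕ → V} (h : NWalk G n f) {i j : ℕ}
    (hij : i ≤ j) (hj : j ≤ n) : NReach G (j - i) (f i) (f j) := by
  refine ⟨fun k => f (i + k), rfl, ?_, ?_⟩
  · simp [Nat.add_sub_cancel' hij]
  · intro k hk
    exact h (i + k) (by omega)

theorem NGeo.sub {G : V → V → Prop} {n : ℕ} {f : ℕ → V} (h : NGeo G n f) {i j : ℕ}
    (hij : i ≤ j) (hj : j ≤ n) : NGeo G (j - i) (fun k => f (i + k)) := by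
  refine ⟨fun k hk => h.1 (i + k) (by omega), fun k hk => ?_⟩
  simp only [Nat.add_zero, Nat.add_sub_cancel' hij] at hk
  have := h.2 _ (((h.1.reach (Nat.zero_le i) (by omega)).trans hk).trans (h.1.reach hj le_rfl))
  omega

theorem NGeo.idx_le {G : V → V → Prop} {n : ℕ} {f g : ℕ → V} (hf : NGeo G n f)
    (hg : NGeo G n g) (_h0 : f 0 = g 0) (hn : f n = g n) {i j : ℕ} (hi : i ≤ n) (hj : j ≤ n)
    (e : f i = g j) : j ≤ i := by
  have h1 := hf.1.reach (Nat.zero_le i) hi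
  have h2 := hg.1.reach hj le_rfl
  rw [e] at h1
  have h3 := h1.trans h2
  rw [← hn] at h3
  have := hf.2 _ h3
  omega

theorem NGeo.idx_eq {G : V → V → Prop} {n : ℕ} {f g : ℕ → V} (hf : NGeo G n f)
    (hg : NGeo G n g) (h0 : f 0 = g 0) (hn : f n = g n) {i j : ℕ} (hi : i ≤ n) (hj : j ≤ n)
    (e : f i = g j) : i = j :=
  le_antisymm (hg.idx_le hf h0.symm hn.symm hj hi e.symm) (hf.idx_le hg h0 hn hi hj e)

theorem nreach_iff {G : V → V → Prop} {n : ℕ} {a b : V} :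
    NReach G n a b ↔ ∃ P : Fin (n + 1) → V, IsDiwalk G a b P := by
  constructor
  · rintro ⟨f, f0, fn, hf⟩
    exact ⟨fun i => f i, by simpa using f0, by simpa using fn, fun i => by simpa using hf i i.2⟩
  · rintro ⟨P, P0, Pn, hP⟩
    refine ⟨fun i => if h : i < n + 1 then P ⟨i, h⟩ else P 0, ?_, ?_, ?_⟩
    · simpa using P0
    · simpa [Fin.last] using Pn
    · intro i hi
      have h1 : i < n + 1 := by omega
      simpa [hi, h1] using hP ⟨i, hi⟩

theorem ddist_le {G : V → V → Prop} {n : ℕ} {a b : V} (h : NReach G n a b) :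
    ddist G a b ≤ n := by
  obtain ⟨P, hP⟩ := nreach_iff.1 h
  exact sInf_le ⟨n, P, rfl, hP⟩

theorem ddist_eq {G : V → V → Prop} {n : ℕ} {f : ℕ → V} (h : NGeo G n f) :
    ddist G (f 0) (f n) = n := by
  apply le_antisymm (ddist_le (h.1.reach (Nat.zero_le n) le_rfl))
  apply le_sInf
  rintro _ ⟨m, P, rfl, hP⟩
  exact_mod_cast h.2 m (nreach_iff.2 ⟨P, hP⟩)

/-- the trap whose second path is trivial -/
def geoTrap {G : V → V → Prop} {n : ℕ} {f : ℕ → V} (h : NGeo G n f) (hn : 1 ≤ n) (a b : V)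
    (ha : f 0 = a) (hb : f n = b) : Trap G a b where
  lenP := n
  lenQ := 0
  x := b
  P := fun i => f i
  Q := fun _ => b
  one_le_lenP := hn
  lenQ_le := Nat.zero_le n
  hPinj := fun i j e => Fin.ext (h.idx_eq h rfl rfl (by omega) (by omega) e)
  hQinj := fun i j _ => Subsingleton.elim (α := Fin 1) i j
  hP := ⟨by simpa using ha, by simpa using hb, fun i => by simpa using h.1 i i.2⟩
  hQ := ⟨rfl, rfl, fun i => i.elim0⟩
  hPgeo := by rw [← ha, ← hb]; exact ddist_eq h
  hQgeo := by
    have : NGeo G 0 (fun _ => b) := ⟨fun i hi => absurd hi (by omega), fun k _ => Nat.zero_le k⟩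
    exact ddist_eq this
  disj := by
    intro i j e
    have : (i : ℕ) = n := h.idx_eq h rfl rfl (by omega) le_rfl (e.trans hb.symm)
    exact ⟨Or.inr (Fin.ext this), Or.inl (Subsingleton.elim (α := Fin 1) _ _)⟩
  eq_case := by
    intro e
    have : 0 = n := h.idx_eq h rfl rfl (Nat.zero_le n) le_rfl (by rw [ha, hb, e])
    omega

theorem core {G : V → V → Prop} {t n : ℕ} (hd : Dispersed G t) (hn : 2 ≤ n) (hnt : n ≤ t)
    {f g : ℕ → V} (hf : NGeo G n f) (hg : NGeo G n g) (h0 : f 0 = g 0) (hl : f n = g n)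
    (hne : ∀ i, 0 < i → i < n → f i ≠ g i) : False := by
  have hvx : f 0 ≠ f n := fun e => by
    have : 0 = n := hf.idx_eq hf rfl rfl (Nat.zero_le n) le_rfl e
    omega
  refine hd.1 _ _ hvx ⟨geoTrap hf (by omega) _ _ rfl rfl,
    geoTrap hg (by omega) _ _ h0.symm hl.symm, hnt, hnt, ?_, ?_⟩
  · have key : ∀ i j : ℕ, i ≤ n → j ≤ n → f i = g j → f i = f 0 ∨ f i = f n := by
      intro i j hi hj e
      have := hf.idx_eq hg h0 hl hi hj e
      subst this
      rcases Nat.eq_zero_or_pos i with h | h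
      · left; rw [h]
      rcases Nat.lt_or_ge i n with h' | h'
      · exact absurd e (hne i h h')
      · right; rw [le_antisymm hi h']
    rintro y ⟨h1, h2⟩
    rcases h1 with ⟨i, rfl⟩ | ⟨i, rfl⟩
    · rcases h2 with ⟨j, e⟩ | ⟨j, e⟩
      · exact key i j (Nat.lt_succ_iff.1 i.2) (Nat.lt_succ_iff.1 j.2) e.symm
      · exact Or.inr e.symm
    · exact Or.inr rfl
  · rw [Set.disjoint_left]
    rintro y h1 h2
    rcases h1 with ⟨i, rfl⟩ | ⟨i, _⟩
    · rcases h2 with ⟨j, e⟩ | ⟨j, _⟩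
      · have hi : (i : ℕ) < n := i.2
        have hj : (j : ℕ) < n := j.2
        have e1 : g j = f i := congrArg Prod.fst e
        have e2 : g (j + 1) = f (i + 1) := congrArg Prod.snd e
        have hij := hf.idx_eq hg h0 hl hi.le hj.le e1.symm
        rw [← hij] at e1 e2
        rcases Nat.eq_zero_or_pos (i : ℕ) with h | h
        · exact hne (i + 1) (by omega) (by omega) e2.symm
        · exact hne i h hi e1.symm
      · exact j.elim0
    · exact i.elim0

theorem nunique {G : V → V → Prop} {t n : ℕ} (hd : Dispersed G t) (hnt : n ≤ t)
    {f g : ℕ → V} (hf : NGeo G n f) (hg : NGeo G n g) (h0 : f 0 = g 0) (hl : f n = g n) :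
    ∀ i ≤ n, f i = g i := by
  classical
  by_contra hc
  have hex : ∃ i, i ≤ n ∧ f i ≠ g i := by
    push Not at hc
    exact hc
  obtain ⟨hi, hine⟩ := Nat.find_spec hex
  have hmin := fun k => Nat.find_min hex (m := k)
  set i := Nat.find hex
  have hi0 : i ≠ 0 := fun e => hine (by rw [e]; exact h0)
  have hex2 : ∃ b, i < b ∧ f b = g b :=
    ⟨n, lt_of_le_of_ne hi (fun e => hine (by rw [e]; exact hl)), hl⟩
  obtain ⟨hb, hbe⟩ := Nat.find_spec hex2
  have hbn : Nat.find hex2 ≤ n :=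
    Nat.find_min' hex2 ⟨lt_of_le_of_ne hi (fun e => hine (by rw [e]; exact hl)), hl⟩
  have hmin2 := fun k => Nat.find_min hex2 (m := k)
  set b := Nat.find hex2
  have hae : f (i - 1) = g (i - 1) := by
    by_contra h
    exact hmin (i - 1) (by omega) ⟨by omega, h⟩
  refine core hd (n := b - (i - 1)) (by omega) (by omega) (hf.sub (i := i - 1) (by omega) hbn)
    (hg.sub (i := i - 1) (by omega) hbn) hae ?_ ?_
  · simpa [Nat.add_sub_cancel' (show i - 1 ≤ b by omega)] using hbe
  · intro k hk hk' e
    rcases Nat.lt_or_ge i (i - 1 + k) with h | h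
    · exact hmin2 (i - 1 + k) (by omega) ⟨h, e⟩
    · have : i - 1 + k = i := by omega
      rw [this] at e
      exact hine e

theorem diwalk_geo {G : V → V → Prop} {n : ℕ} {a b : V} {P : Fin (n + 1) → V}
    (hP : IsDiwalk G a b P) (hd : ddist G a b = n) :
    ∃ f : ℕ → V, f 0 = a ∧ f n = b ∧ NGeo G n f ∧ ∀ i : Fin (n + 1), f i = P i := by
  obtain ⟨P0, Pn, hP⟩ := hP
  have f0 : (fun i => if h : i < n + 1 then P ⟨i, h⟩ else P 0) 0 = a := by simpa using P0
  have fn : (fun i => if h : i < n + 1 then P ⟨i, h⟩ else P 0) n = b := by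
    simpa [Fin.last] using Pn
  refine ⟨fun i => if h : i < n + 1 then P ⟨i, h⟩ else P 0, f0, fn, ⟨?_, ?_⟩, ?_⟩
  · intro i hi
    have h1 : i < n + 1 := by omega
    simpa [hi, h1] using hP ⟨i, hi⟩
  · intro k hk
    rw [f0, fn] at hk
    have := ddist_le hk
    rw [hd] at this
    exact_mod_cast this
  · intro i
    exact dif_pos i.2

/-- If `t ≥ 1`, `G` is a finite `t`-dispersed digraph and
`dist(v, x) ≤ t`, then there is a unique geodesic directed path from `v` to
`x`. -/
theorem unique_geodesic_of_dispersed [Fintype V] (G : V → V → Prop)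
    (t : ℕ) (ht : 1 ≤ t) (hdisp : Dispersed G t)
    (v x : V) (hvx : ddist G v x ≤ (t : ℕ∞)) :
    (∃ (m : ℕ) (P : Fin (m + 1) → V),
        Function.Injective P ∧ IsDiwalk G v x P ∧ ddist G v x = (m : ℕ∞)) ∧
    ∀ (m : ℕ) (P Q : Fin (m + 1) → V),
      Function.Injective P → IsDiwalk G v x P → ddist G v x = (m : ℕ∞) →
      Function.Injective Q → IsDiwalk G v x Q → P = Q := by
  constructor
  · have hne : {n : ℕ∞ | ∃ (m : ℕ) (P : Fin (m + 1) → V),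
        n = (m : ℕ∞) ∧ IsDiwalk G v x P}.Nonempty := by
      by_contra h
      rw [Set.not_nonempty_iff_eq_empty] at h
      rw [ddist, h, sInf_empty] at hvx
      simp at hvx
    obtain ⟨m, P, e, hP⟩ := csInf_mem hne
    change ddist G v x = m at e
    obtain ⟨f, f0, fn, hf, hfP⟩ := diwalk_geo hP e
    refine ⟨m, P, fun i j hij => ?_, hP, e⟩
    rw [← hfP, ← hfP] at hij
    exact Fin.ext (hf.idx_eq hf rfl rfl (by omega) (by omega) hij)
  · intro m P Q _ hP hm _ hQ
    obtain ⟨f, f0, fn, hf, hfP⟩ := diwalk_geo hP hm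
    obtain ⟨g, g0, gn, hg, hgQ⟩ := diwalk_geo hQ hm
    rw [hm] at hvx
    funext i
    rw [← hfP, ← hgQ]
    exact nunique hdisp (by exact_mod_cast hvx) hf hg (f0.trans g0.symm) (fn.trans gn.symm) i
      (by omega)
end

section
/- Let t ≥ 1 be an integer, let G be a finite digraph that is t-dispersed, and let u and v be distinct vertices of G. Then all (v,u)-traps of length at most t contain the same out-neighbor of v; that is, if P₁ ∪ Q₁ and P₂ ∪ Q₂ are (v,u)-traps each of length at most t, then the second vertex of the geodesic path P₁ starting at v equals the second vertex of the geodesic path P₂ starting at v. -/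
variable {V : Type*}

/-- `p` restricted to `0..m` is a directed walk. -/
def WalkN (G : V → V → Prop) (m : ℕ) (p : ℕ → V) : Prop := ∀ i < m, G (p i) (p (i + 1))

/-- `p` restricted to `0..m` is a geodesic. -/
def GeoN (G : V → V → Prop) (m : ℕ) (p : ℕ → V) : Prop :=
  WalkN G m p ∧ ∀ (k : ℕ) (r : ℕ → V), WalkN G k r → r 0 = p 0 → r k = p m → m ≤ k

theorem WalkN.glue {G : V → V → Prop} {a b : ℕ} {p q : ℕ → V}
    (hp : WalkN G a p) (hq : WalkN G b q) (h : p a = q 0) :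
    ∃ r, WalkN G (a + b) r ∧ r 0 = p 0 ∧ r (a + b) = q b := by
  refine ⟨fun i => if i ≤ a then p i else q (i - a), ?_, by simp, ?_⟩
  · intro i hi
    dsimp only
    by_cases h1 : i + 1 ≤ a
    · rw [if_pos (by omega), if_pos h1]; exact hp i (by omega)
    · rw [if_neg h1]
      by_cases h2 : i = a
      · subst h2
        rw [if_pos le_rfl, h]
        have := hq 0 (by omega)
        simpa using this
      · rw [if_neg (by omega)]
        have := hq (i - a) (by omega)
        rwa [show i - a + 1 = i + 1 - a by omega] at this
  · dsimp only
    by_cases hb : b = 0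
    · subst hb; simp [h]
    · rw [if_neg (by omega)]; congr 1; omega

theorem WalkN.shift {G : V → V → Prop} {m : ℕ} {p : ℕ → V} (hp : WalkN G m p) (j : ℕ) :
    WalkN G (m - j) (fun i => p (j + i)) := fun i hi => hp (j + i) (by omega)

theorem WalkN.mono {G : V → V → Prop} {m k : ℕ} {p : ℕ → V} (hp : WalkN G m p) (h : k ≤ m) :
    WalkN G k p := fun i hi => hp i (by omega)

theorem GeoN.shift {G : V → V → Prop} {m : ℕ} {p : ℕ → V} (hp : GeoN G m p) {j : ℕ}
    (hj : j ≤ m) : GeoN G (m - j) (fun i => p (j + i)) := by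
  refine ⟨hp.1.shift j, fun k r hr h0 hk => ?_⟩
  obtain ⟨s, hs, s0, s1⟩ := (hp.1.mono hj).glue hr (by simpa using h0.symm)
  have := hp.2 _ s hs s0 (by rw [s1, hk]; show p (j + (m - j)) = p m; congr 1; omega)
  omega

theorem GeoN.mono {G : V → V → Prop} {m k : ℕ} {p : ℕ → V} (hp : GeoN G m p)
    (hk : k ≤ m) : GeoN G k p := by
  refine ⟨hp.1.mono hk, fun l r hr h0 hl => ?_⟩
  obtain ⟨s, hs, s0, s1⟩ := hr.glue (hp.1.shift k) (by simpa using hl)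
  have := hp.2 _ s hs (s0.trans h0) (by rw [s1]; show p (k + (m - k)) = p m; congr 1; omega)
  omega

theorem GeoN.eq_idx {G : V → V → Prop} {m n : ℕ} {p q : ℕ → V} (hp : GeoN G m p)
    (hq : GeoN G n q) (h0 : p 0 = q 0) {i j : ℕ} (hi : i ≤ m) (hj : j ≤ n) (h : p i = q j) :
    i = j := by
  have h1 := (hp.mono hi).2 j q (hq.1.mono hj) h0.symm h.symm
  have h2 := (hq.mono hj).2 i p (hp.1.mono hi) h0 h
  omega

theorem GeoN.const (G : V → V → Prop) (w : V) : GeoN G 0 (fun _ => w) :=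
  ⟨fun i hi => by omega, fun k _ _ _ _ => Nat.zero_le k⟩

theorem GeoN.ddist_eq {G : V → V → Prop} {m : ℕ} {p : ℕ → V} (hp : GeoN G m p) :
    ddist G (p 0) (p m) = m := by
  apply le_antisymm
  · apply sInf_le
    refine ⟨m, fun i => p i, rfl, by simp, by simp, fun i => ?_⟩
    simpa using hp.1 i i.2
  · apply le_sInf
    rintro n ⟨k, P, rfl, h0, h1, h2⟩
    have := hp.2 k (fun i => P ⟨min i k, by omega⟩) (fun i hi => ?_) ?_ ?_
    · exact_mod_cast this
    · convert h2 ⟨i, hi⟩ using 2 <;> simp [Fin.ext_iff] <;> omega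
    · rw [← h0]; simp
    · rw [← h1]; congr 1; simp [Fin.ext_iff]

theorem GeoN.of_diwalk {G : V → V → Prop} {a b : V} {m : ℕ} {P : Fin (m + 1) → V}
    (h : IsDiwalk G a b P) (hd : ddist G a b = (m : ℕ∞)) :
    GeoN G m (fun i => P ⟨min i m, by omega⟩) := by
  obtain ⟨h0, h1, h2⟩ := h
  refine ⟨fun i hi => ?_, fun k r hr r0 r1 => ?_⟩
  · convert h2 ⟨i, hi⟩ using 2 <;> simp [Fin.ext_iff] <;> omega
  · have e0 : r 0 = a := by rw [r0, ← h0]; simp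
    have e1 : r k = b := by rw [r1, ← h1]; simp [Fin.last]
    have : ddist G a b ≤ (k : ℕ∞) := by
      apply sInf_le
      refine ⟨k, fun i => r i, rfl, by simpa using e0, by simpa using e1, fun i => ?_⟩
      simpa using hr i i.2
    rw [hd] at this
    exact_mod_cast this

/-- trap data with paths indexed by natural numbers -/
structure PT (G : V → V → Prop) (m n : ℕ) (p q : ℕ → V) : Prop where
  gp : GeoN G m p
  gq : GeoN G n q
  one : 1 ≤ m
  le : n ≤ m
  tip : p m = q n
  disj : ∀ i j, i ≤ m → j ≤ n → p i = q j → i = m ∧ j = n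

theorem PT.of_trap {G : V → V → Prop} {v u : V} (T : Trap G v u) (hvu : v ≠ u) :
    ∃ p q : ℕ → V, PT G T.lenP T.lenQ p q ∧ p 0 = v ∧ q 0 = u ∧ p 1 = T.P 1 := by
  have h1 := T.one_le_lenP
  have p0 := T.hP.1
  have pm := T.hP.2.1
  have q0 := T.hQ.1
  have qn := T.hQ.2.1
  refine ⟨fun i => T.P ⟨min i T.lenP, by omega⟩, fun i => T.Q ⟨min i T.lenQ, by omega⟩,
    ⟨GeoN.of_diwalk T.hP T.hPgeo, GeoN.of_diwalk T.hQ T.hQgeo, h1, T.lenQ_le, ?_, ?_⟩, ?_, ?_, ?_⟩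
  · have e1 : T.P ⟨min T.lenP T.lenP, by omega⟩ = T.x := by
      rw [← pm]; congr 1; simp [Fin.ext_iff]
    have e2 : T.Q ⟨min T.lenQ T.lenQ, by omega⟩ = T.x := by
      rw [← qn]; congr 1; simp [Fin.ext_iff]
    exact e1.trans e2.symm
  · intro i j hi hj h
    have hd := T.disj _ _ h
    rcases hd with ⟨hi' | hi', hj' | hj'⟩ <;> rw [hi', hj'] at h
    · exact absurd (p0.symm.trans (h.trans q0)) hvu
    · rw [qn, ← pm] at h
      have := T.hPinj h
      simp [Fin.ext_iff] at this
      omega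
    · rw [pm, ← qn] at h
      have := T.hQinj h
      simp [Fin.ext_iff] at this hi' hj'
      omega
    · simp [Fin.ext_iff] at hi' hj'
      omega
  · simpa using p0
  · simpa using q0
  · dsimp only; congr 1; simp only [Fin.ext_iff, Fin.val_one']
    rw [Nat.mod_eq_of_lt (by omega)]; omega

/-- Turn trap data into a trap. -/
def PT.toTrap {G : V → V → Prop} {m n : ℕ} {p q : ℕ → V} (h : PT G m n p q) {v u : V}
    (hv : p 0 = v) (hu : q 0 = u) (hvu : v ≠ u) : Trap G v u where
  lenP := m
  lenQ := n
  x := p m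
  P := fun i => p i
  Q := fun i => q i
  one_le_lenP := h.one
  lenQ_le := h.le
  hPinj := fun i j hij => Fin.ext (h.gp.eq_idx h.gp rfl (by omega) (by omega) hij)
  hQinj := fun i j hij => Fin.ext (h.gq.eq_idx h.gq rfl (by omega) (by omega) hij)
  hP := ⟨by simpa using hv, by simp, fun i => by simpa using h.gp.1 i i.2⟩
  hQ := ⟨by simpa using hu, by simpa using h.tip.symm, fun i => by simpa using h.gq.1 i i.2⟩
  hPgeo := by rw [← hv]; exact h.gp.ddist_eq
  hQgeo := by rw [← hu, h.tip]; exact h.gq.ddist_eq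
  disj := fun i j hij => by
    have := h.disj i j (by omega) (by omega) hij
    exact ⟨Or.inr (Fin.ext this.1), Or.inr (Fin.ext this.2)⟩
  eq_case := fun e => absurd e.symm hvu

theorem no_two {G : V → V → Prop} {t : ℕ} (hd : Dispersed G t) {m₁ n₁ m₂ n₂ : ℕ}
    {p₁ q₁ p₂ q₂ : ℕ → V} (H₁ : PT G m₁ n₁ p₁ q₁) (H₂ : PT G m₂ n₂ p₂ q₂)
    (ep : p₁ 0 = p₂ 0) (eq : q₁ 0 = q₂ 0) (h₁ : m₁ ≤ t) (h₂ : m₂ ≤ t) (hne : p₁ 1 ≠ p₂ 1)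
    (A : ∀ i j, 1 ≤ i → i ≤ m₁ → j ≤ m₂ → p₁ i = p₂ j → p₁ i = q₁ 0)
    (B : ∀ i j, i ≤ m₁ → 1 ≤ j → j ≤ n₂ → p₁ i ≠ q₂ j)
    (C : ∀ i j, i ≤ m₂ → 1 ≤ j → j ≤ n₁ → p₂ i ≠ q₁ j)
    (D : ∀ i j, 1 ≤ i → i ≤ n₁ → j ≤ n₂ → q₁ i ≠ q₂ j) : False := by
  have hvu : p₁ 0 ≠ q₁ 0 := fun e => by
    have := H₁.disj 0 0 (by omega) (by omega) e
    have := H₁.one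
    omega
  refine hd.1 (p₁ 0) (q₁ 0) hvu
    ⟨H₁.toTrap rfl rfl hvu, H₂.toTrap ep.symm eq.symm hvu, h₁, h₂, ?_, ?_⟩
  · rintro w ⟨⟨i, hi⟩ | ⟨i, hi⟩, ⟨j, hj⟩ | ⟨j, hj⟩⟩
    · have hi' : p₁ i = w := hi
      have hj' : p₂ j = w := hj
      have bi : (i : ℕ) < m₁ + 1 := i.2
      have bj : (j : ℕ) < m₂ + 1 := j.2
      by_cases i0 : (i : ℕ) = 0
      · left; rw [← hi', i0]
      · right
        have := A i j (by omega) (by omega) (by omega) (hi'.trans hj'.symm)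
        exact hi'.symm.trans this
    · have hi' : p₁ i = w := hi
      have hj' : q₂ j = w := hj
      have bi : (i : ℕ) < m₁ + 1 := i.2
      have bj : (j : ℕ) < n₂ + 1 := j.2
      by_cases j0 : (j : ℕ) = 0
      · right; rw [← hj', j0]; exact eq.symm
      · exact absurd (hi'.trans hj'.symm) (B i j (by omega) (by omega) (by omega))
    · have hi' : q₁ i = w := hi
      have hj' : p₂ j = w := hj
      have bi : (i : ℕ) < n₁ + 1 := i.2
      have bj : (j : ℕ) < m₂ + 1 := j.2
      by_cases i0 : (i : ℕ) = 0
      · right; rw [← hi', i0]; rfl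
      · exact absurd (hj'.trans hi'.symm) (C j i (by omega) (by omega) (by omega))
    · have hi' : q₁ i = w := hi
      have hj' : q₂ j = w := hj
      have bi : (i : ℕ) < n₁ + 1 := i.2
      have bj : (j : ℕ) < n₂ + 1 := j.2
      by_cases i0 : (i : ℕ) = 0
      · right; rw [← hi', i0]; rfl
      · exact absurd (hi'.trans hj'.symm) (D i j (by omega) (by omega) (by omega))
  · rw [Set.disjoint_left]
    rintro e (⟨i, hi⟩ | ⟨i, hi⟩) (⟨j, hj⟩ | ⟨j, hj⟩)
    · have bi : (i : ℕ) < m₁ := i.2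
      have bj : (j : ℕ) < m₂ := j.2
      have he : (p₁ i, p₁ (i + 1)) = (p₂ j, p₂ (j + 1)) := hi.trans hj.symm
      rw [Prod.mk.injEq] at he
      by_cases i0 : (i : ℕ) = 0
      · have hj0 := H₁.gp.eq_idx H₂.gp ep (by omega) (by omega) he.1
        rw [← hj0, i0] at he
        exact hne he.2
      · have := A i j (by omega) (by omega) (by omega) he.1
        have := H₁.disj i 0 (by omega) (by omega) this
        omega
    · have bi : (i : ℕ) < m₁ := i.2
      have bj : (j : ℕ) < n₂ := j.2
      have he : (p₁ i, p₁ (i + 1)) = (q₂ j, q₂ (j + 1)) := hi.trans hj.symm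
      rw [Prod.mk.injEq] at he
      exact B _ _ (by omega) (by omega) (by omega) he.2
    · have bi : (i : ℕ) < n₁ := i.2
      have bj : (j : ℕ) < m₂ := j.2
      have he : (q₁ i, q₁ (i + 1)) = (p₂ j, p₂ (j + 1)) := hi.trans hj.symm
      rw [Prod.mk.injEq] at he
      exact C _ _ (by omega) (by omega) (by omega) he.2.symm
    · have bi : (i : ℕ) < n₁ := i.2
      have bj : (j : ℕ) < n₂ := j.2
      have he : (q₁ i, q₁ (i + 1)) = (q₂ j, q₂ (j + 1)) := hi.trans hj.symm
      rw [Prod.mk.injEq] at he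
      exact D _ _ (by omega) (by omega) (by omega) he.2

/-- A geodesic with at least one edge gives a trap whose second path is trivial. -/
theorem PT.triv {G : V → V → Prop} {m : ℕ} {p : ℕ → V} (hp : GeoN G m p) (h1 : 1 ≤ m) {w : V}
    (hw : p m = w) : PT G m 0 p (fun _ => w) :=
  ⟨hp, GeoN.const G w, h1, by omega, hw, fun i j hi hj h =>
    ⟨hp.eq_idx hp rfl hi le_rfl (h.trans hw.symm), by omega⟩⟩

/-- Two geodesics of length at most `t` that leave a vertex differently never meet again. -/
theorem geo_disjoint {G : V → V → Prop} {t : ℕ} (hd : Dispersed G t) {m n : ℕ} {p q : ℕ → V}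
    (hp : GeoN G m p) (hq : GeoN G n q) (h0 : p 0 = q 0) (hm : m ≤ t) (hn : n ≤ t)
    (hne : p 1 ≠ q 1) (i : ℕ) :
    ∀ j, 1 ≤ i → i ≤ m → j ≤ n → p i ≠ q j := by
  induction i using Nat.strong_induction_on with
  | _ i ih =>
    intro j hi him hjn h
    have hij := hp.eq_idx hq h0 him hjn h
    subst hij
    refine no_two hd (PT.triv (hp.mono him) hi rfl) (PT.triv (hq.mono hjn) hi h.symm) h0 rfl
      (by omega) (by omega) hne ?_ ?_ ?_ ?_
    · intro a b ha ha' hb hab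
      by_cases hai : a = i
      · rw [hai]
      · exact absurd hab (ih a (by omega) b ha (by omega) (by omega))
    all_goals intro a b _ _ _; omega

/-- Trap data with the first steps of the second path removed. -/
theorem PT.shift {G : V → V → Prop} {m n : ℕ} {p q : ℕ → V} (h : PT G m n p q) {j : ℕ}
    (hj : j ≤ n) : PT G m (n - j) p (fun i => q (j + i)) := by
  refine ⟨h.gp, h.gq.shift hj, h.one, by have := h.le; omega, ?_, fun a b ha hb hab => ?_⟩
  · rw [h.tip]; congr 1; omega
  · have := h.disj a (j + b) ha (by omega) hab
    omega

theorem main_aux {G : V → V → Prop} {t : ℕ} (hd : Dispersed G t) (v : V) (N : ℕ) :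
    ∀ (u : V) (m₁ n₁ m₂ n₂ : ℕ) (p₁ q₁ p₂ q₂ : ℕ → V), m₁ + n₁ + m₂ + n₂ ≤ N →
      PT G m₁ n₁ p₁ q₁ → PT G m₂ n₂ p₂ q₂ → p₁ 0 = v → p₂ 0 = v → q₁ 0 = u → q₂ 0 = u →
      m₁ ≤ t → m₂ ≤ t → p₁ 1 ≠ p₂ 1 → False := by
  induction N using Nat.strong_induction_on with
  | _ N ih =>
    intro u m₁ n₁ m₂ n₂ p₁ q₁ p₂ q₂ hN H₁ H₂ ev₁ ev₂ eu₁ eu₂ h₁ h₂ hne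
    have l1 := H₁.le
    have l2 := H₂.le
    refine no_two hd H₁ H₂ (ev₁.trans ev₂.symm) (eu₁.trans eu₂.symm) h₁ h₂ hne ?_ ?_ ?_ ?_
    · intro i j hi him hj h
      exact absurd h
        (geo_disjoint hd H₁.gp H₂.gp (ev₁.trans ev₂.symm) h₁ h₂ hne i j hi him hj)
    · intro i j hi hj hjn h
      have hi0 : 1 ≤ i := by
        by_contra hc
        have : i = 0 := by omega
        subst this
        have := H₂.disj 0 j (by omega) hjn (ev₂.trans (ev₁.symm.trans h))
        have := H₂.one
        omega
      exact ih (i + 0 + m₂ + (n₂ - j)) (by omega) (q₂ j) _ _ _ _ _ _ _ _ le_rfl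
        (PT.triv (H₁.gp.mono hi) hi0 h) (H₂.shift hjn) ev₁ ev₂ rfl rfl (by omega) h₂ hne
    · intro i j hi hj hjn h
      have hi0 : 1 ≤ i := by
        by_contra hc
        have : i = 0 := by omega
        subst this
        have := H₁.disj 0 j (by omega) hjn (ev₁.trans (ev₂.symm.trans h))
        have := H₁.one
        omega
      exact ih (m₁ + (n₁ - j) + i + 0) (by omega) (q₁ j) _ _ _ _ _ _ _ _ le_rfl
        (H₁.shift hjn) (PT.triv (H₂.gp.mono hi) hi0 h) ev₁ ev₂ rfl rfl h₁ (by omega) hne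
    · intro i j hi hin hj h
      have e0 := eu₁.trans eu₂.symm
      by_cases hq : q₁ 1 = q₂ 1
      · have hij := H₁.gq.eq_idx H₂.gq e0 hin hj h
        exact ih (m₁ + (n₁ - 1) + m₂ + (n₂ - 1)) (by omega) (q₁ 1) _ _ _ _ _ _ _ _ le_rfl
          (H₁.shift (j := 1) (by omega)) (H₂.shift (j := 1) (by omega)) ev₁ ev₂ rfl hq.symm
          h₁ h₂ hne
      · exact geo_disjoint hd H₁.gq H₂.gq e0 (by omega) (by omega) hq i j hi hin hj h

/-- If `t ≥ 1`, `G` is a finite `t`-dispersed digraph and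
`u ≠ v`, then all `(v, u)`-traps of length at most `t` contain the same
out-neighbor of `v`: the second vertices of their first geodesics agree. -/
theorem traps_same_outneighbor [Fintype V] (G : V → V → Prop)
    (t : ℕ) (ht : 1 ≤ t) (hdisp : Dispersed G t)
    (v u : V) (hvu : v ≠ u) (T₁ T₂ : Trap G v u)
    (h₁ : T₁.lenP ≤ t) (h₂ : T₂.lenP ≤ t) :
    T₁.P 1 = T₂.P 1 := by
  by_contra hne
  obtain ⟨p₁, q₁, H₁, e1, e2, e3⟩ := PT.of_trap T₁ hvu
  obtain ⟨p₂, q₂, H₂, f1, f2, f3⟩ := PT.of_trap T₂ hvu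
  exact main_aux hdisp v _ u _ _ _ _ p₁ q₁ p₂ q₂ le_rfl H₁ H₂ e1 f1 e2 f2 h₁ h₂
    (by rw [e3, f3]; exact hne)
end

section
/- Let G be a finite digraph and let v and u be distinct vertices such that S_ρ(v) ∩ B_ρ(u) ≠ ∅ for some integer ρ ≥ 0. Then a (v,u)-trap exists, and the trap distance ρ*(v,u) is equal to the minimum value of ρ for which S_ρ(v) ∩ B_ρ(u) ≠ ∅. -/
variable {V : Type*}

/-- The sphere `S_ρ(v)`: vertices at directed distance exactly `ρ` from `v`. -/
def dSphere (G : V → V → Prop) (v : V) (ρ : ℕ) : Set V :=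
  {x | ddist G v x = (ρ : ℕ∞)}

/-- The ball `B_ρ(v)`: vertices at directed distance at most `ρ` from `v`. -/
def dBall (G : V → V → Prop) (v : V) (ρ : ℕ) : Set V :=
  {x | ddist G v x ≤ (ρ : ℕ∞)}

theorem ddist_le_of_walk {G : V → V → Prop} {a b : V} {m : ℕ} {P : Fin (m + 1) → V}
    (h : IsDiwalk G a b P) : ddist G a b ≤ (m : ℕ∞) :=
  sInf_le ⟨m, P, rfl, h⟩

theorem exists_walk_of_ddist_le {G : V → V → Prop} {a b : V} {n : ℕ}
    (h : ddist G a b ≤ (n : ℕ∞)) :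
    ∃ (m : ℕ) (P : Fin (m + 1) → V), m ≤ n ∧ ddist G a b = (m : ℕ∞) ∧ IsDiwalk G a b P := by
  have hne : {n : ℕ∞ | ∃ (m : ℕ) (P : Fin (m + 1) → V),
      n = (m : ℕ∞) ∧ IsDiwalk G a b P}.Nonempty := by
    by_contra hc
    rw [Set.not_nonempty_iff_eq_empty] at hc
    rw [ddist, hc, sInf_empty, top_le_iff] at h
    exact ENat.natCast_ne_top n h
  obtain ⟨m, P, h1, h2⟩ := csInf_mem hne
  have h1' : ddist G a b = (m : ℕ∞) := h1
  refine ⟨m, P, ?_, h1', h2⟩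
  rw [h1'] at h
  exact_mod_cast h

theorem walk_append {G : V → V → Prop} {a b c : V} {m n : ℕ} {P : Fin (m + 1) → V}
    {Q : Fin (n + 1) → V} (hP : IsDiwalk G a b P) (hQ : IsDiwalk G b c Q) :
    ddist G a c ≤ ((m + n : ℕ) : ℕ∞) := by
  obtain ⟨p0, p1, p2⟩ := hP
  obtain ⟨q0, q1, q2⟩ := hQ
  apply ddist_le_of_walk (P := fun k : Fin (m + n + 1) =>
    if hk : k.val ≤ m then P ⟨k.val, by omega⟩ else Q ⟨k.val - m, by omega⟩)
  refine ⟨?_, ?_, ?_⟩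
  · simpa using p0
  · by_cases hn : n = 0
    · subst hn
      have : b = c := by rw [← q0, ← q1]; rfl
      simpa [Fin.last, this] using p1
    · have h1 : ¬ (m + n ≤ m) := by omega
      simp only [Fin.val_last, h1, dite_false]
      rw [← q1]
      congr 1
      ext
      simp
  · rintro ⟨i, hi⟩
    simp only [Fin.castSucc_mk, Fin.succ_mk]
    rcases lt_trichotomy i m with h | h | h
    · rw [dif_pos (by omega), dif_pos (by omega)]
      exact p2 ⟨i, h⟩
    · subst h
      rw [dif_pos (by omega), dif_neg (by omega)]
      have := q2 ⟨0, by omega⟩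
      have e : P ⟨i, by omega⟩ = Q (Fin.castSucc ⟨0, by omega⟩) := by
        have e1 : P ⟨i, by omega⟩ = b := p1
        rw [e1]; exact q0.symm
      rw [e]
      convert this using 2
      ext
      simp
    · rw [dif_neg (by omega), dif_neg (by omega)]
      have := q2 ⟨i - m, by omega⟩
      convert this using 2
      · rfl
      · exact Fin.ext (show i + 1 - m = i - m + 1 by omega)

theorem walk_prefix {G : V → V → Prop} {a b : V} {m : ℕ} {P : Fin (m + 1) → V}
    (hP : IsDiwalk G a b P) (i : Fin (m + 1)) : ddist G a (P i) ≤ ((i.val : ℕ) : ℕ∞) := by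
  apply ddist_le_of_walk (P := fun k : Fin (i.val + 1) => P ⟨k.val, by omega⟩)
  exact ⟨hP.1, rfl, fun k => hP.2.2 ⟨k.val, by omega⟩⟩

theorem walk_suffix {G : V → V → Prop} {a b : V} {m : ℕ} {P : Fin (m + 1) → V}
    (hP : IsDiwalk G a b P) (i : Fin (m + 1)) : ddist G (P i) b ≤ ((m - i.val : ℕ) : ℕ∞) := by
  apply ddist_le_of_walk (P := fun k : Fin (m - i.val + 1) => P ⟨i.val + k.val, by omega⟩)
  refine ⟨rfl, ?_, fun k => hP.2.2 ⟨i.val + k.val, by omega⟩⟩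
  rw [← hP.2.1]
  exact congrArg P (Fin.ext (show i.val + (m - i.val) = m by omega))

theorem ddist_tri {G : V → V → Prop} {a b c : V} {m n : ℕ}
    (h1 : ddist G a b ≤ (m : ℕ∞)) (h2 : ddist G b c ≤ (n : ℕ∞)) :
    ddist G a c ≤ ((m + n : ℕ) : ℕ∞) := by
  obtain ⟨m', P, hm, -, hP⟩ := exists_walk_of_ddist_le h1
  obtain ⟨n', Q, hn, -, hQ⟩ := exists_walk_of_ddist_le h2
  refine (walk_append hP hQ).trans ?_
  exact_mod_cast (by omega : m' + n' ≤ m + n)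

theorem geo_prefix {G : V → V → Prop} {a b : V} {m : ℕ} {P : Fin (m + 1) → V}
    (hP : IsDiwalk G a b P) (hg : ddist G a b = (m : ℕ∞)) (i : Fin (m + 1)) :
    ddist G a (P i) = ((i.val : ℕ) : ℕ∞) := by
  obtain ⟨k, R, hk, hd, -⟩ := exists_walk_of_ddist_le (walk_prefix hP i)
  have h := ddist_tri hd.le (walk_suffix hP i)
  rw [hg] at h
  have h' : m ≤ k + (m - i.val) := by exact_mod_cast h
  rw [hd]
  have : k = i.val := by omega
  rw [this]

theorem geo_inj {G : V → V → Prop} {a b : V} {m : ℕ} {P : Fin (m + 1) → V}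
    (hP : IsDiwalk G a b P) (hg : ddist G a b = (m : ℕ∞)) : Function.Injective P := by
  intro i j hij
  have h1 := geo_prefix hP hg i
  rw [hij, geo_prefix hP hg j] at h1
  ext
  exact_mod_cast h1.symm

theorem exists_trap_of_min {G : V → V → Prop} {v u : V} (hvu : v ≠ u) {ρ : ℕ}
    (h : (dSphere G v ρ ∩ dBall G u ρ).Nonempty)
    (hmin : ∀ k : ℕ, (dSphere G v k ∩ dBall G u k).Nonempty → ρ ≤ k) :
    ∃ T : Trap G v u, T.lenP = ρ := by
  obtain ⟨x, hx1, hx2⟩ := h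
  have hx1' : ddist G v x = (ρ : ℕ∞) := hx1
  have hx2' : ddist G u x ≤ (ρ : ℕ∞) := hx2
  obtain ⟨m, P, -, hm, hP⟩ := exists_walk_of_ddist_le hx1'.le
  obtain ⟨n, Q, hn, hQg, hQ⟩ := exists_walk_of_ddist_le hx2'
  have hmρ : m = ρ := by
    rw [hx1'] at hm
    exact_mod_cast hm.symm
  subst hmρ
  have hQi := geo_inj hQ hQg
  refine ⟨⟨m, n, x, P, Q, ?_, hn, geo_inj hP hm, hQi, hP, hQ, hm, hQg, ?_,
    fun e => absurd e.symm hvu⟩, rfl⟩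
  · by_contra hc
    have h0 : m = 0 := by omega
    subst h0
    have h0 : n = 0 := by omega
    subst h0
    apply hvu
    rw [← hP.1, ← hQ.1]
    exact hP.2.1.trans hQ.2.1.symm
  · intro i j hij
    have hs := walk_suffix hQ j
    rw [← hij] at hs
    have ht := ddist_tri (walk_prefix hP i) hs
    rw [hm] at ht
    have ht' : m ≤ i.val + (n - j.val) := by exact_mod_cast ht
    have hji : j.val ≤ i.val := by omega
    have hi : m ≤ i.val := by
      apply hmin
      refine ⟨P i, geo_prefix hP hm i, ?_⟩
      have := walk_prefix hQ j
      rw [← hij] at this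
      exact this.trans (by exact_mod_cast hji)
    have hil : i = Fin.last m := by
      ext
      simp
      omega
    refine ⟨Or.inr hil, Or.inr (hQi ?_)⟩
    rw [← hij, hil, hP.2.1, hQ.2.1]

/-- Let `G` be a finite digraph and `v ≠ u` vertices with
`S_ρ(v) ∩ B_ρ(u) ≠ ∅` for some `ρ ≥ 0`.  Then a `(v, u)`-trap exists, and the
trap distance `ρ*(v, u)` equals the minimum `ρ` with `S_ρ(v) ∩ B_ρ(u) ≠ ∅`. -/
theorem trapDist_eq_min_sphere_ball [Fintype V] (G : V → V → Prop)
    (v u : V) (hvu : v ≠ u)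
    (h : ∃ ρ : ℕ, (dSphere G v ρ ∩ dBall G u ρ).Nonempty) :
    Nonempty (Trap G v u) ∧
      trapDist G v u =
        sInf {n : ℕ∞ | ∃ ρ : ℕ, n = (ρ : ℕ∞) ∧ (dSphere G v ρ ∩ dBall G u ρ).Nonempty} := by
  classical
  obtain ⟨T, hT⟩ := exists_trap_of_min hvu (Nat.find_spec h) (fun k hk => Nat.find_min' h hk)
  refine ⟨⟨T⟩, le_antisymm ?_ ?_⟩
  · apply le_sInf
    rintro n ⟨ρ, rfl, hρ⟩
    refine (sInf_le ⟨T, rfl⟩ : trapDist G v u ≤ _).trans ?_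
    rw [hT]
    exact_mod_cast Nat.find_min' h hρ
  · apply le_sInf
    rintro n ⟨T', rfl⟩
    apply sInf_le
    refine ⟨T'.lenP, rfl, T'.x, T'.hPgeo, ?_⟩
    have := T'.hQgeo
    exact this.le.trans (by exact_mod_cast T'.lenQ_le)
end

section
/- Let 0 < γ < 1 be real, let G be a finite connected d-regular bipartite graph of order n, and let λ > 0 be a real number such that every eigenvalue μ of the adjacency matrix of G with |μ| ≠ d satisfies |μ| ≤ λ. Then every nonempty vertex set S ⊆ V(G) with |S| ≤ n^{1−γ} satisfies |∂S| ≥ ( d²/(λ² + 2d²·n^{−γ}) − 1 )·|S|; in particular h_γ(G) ≥ d²/(λ² + 2d²·n^{−γ}) − 1. -/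
variable {V : Type*}

open Matrix in
/-- Spectral bound: if `y` is orthogonal to all eigenvectors with large eigenvalue. -/
theorem spectral_bound_aux {V : Type*} [Fintype V] [DecidableEq V] (A : Matrix V V ℝ)
    (hA : A.IsHermitian) (lam : ℝ) (y : V → ℝ)
    (h : ∀ (μ : ℝ) (v : V → ℝ), v ≠ 0 → A *ᵥ v = μ • v → |μ| ≤ lam ∨ v ⬝ᵥ y = 0) :
    (A *ᵥ y) ⬝ᵥ (A *ᵥ y) ≤ lam ^ 2 * (y ⬝ᵥ y) := by
  have hsym : Aᵀ = A := by
    rw [← conjTranspose_eq_transpose_of_trivial]; exact hA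
  have key : ∀ x : V → ℝ, x ⬝ᵥ x = ∑ i, (WithLp.ofLp (hA.eigenvectorBasis i) ⬝ᵥ x) ^ 2 := by
    intro x
    have h1 := hA.eigenvectorBasis.sum_sq_norm_inner_right (WithLp.toLp 2 x)
    rw [EuclideanSpace.norm_sq_eq] at h1
    simp only [Real.norm_eq_abs, sq_abs, EuclideanSpace.inner_eq_star_dotProduct] at h1
    simp only [dotProduct, ← pow_two] at h1 ⊢
    rw [← h1]
    refine Finset.sum_congr rfl fun i _ => ?_
    congr 1
    refine Finset.sum_congr rfl fun j _ => ?_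
    simp [mul_comm]
  rw [key, key, Finset.mul_sum]
  refine Finset.sum_le_sum fun i _ => ?_
  have he := hA.mulVec_eigenvectorBasis i
  have h2 : WithLp.ofLp (hA.eigenvectorBasis i) ⬝ᵥ (A *ᵥ y)
      = hA.eigenvalues i * (WithLp.ofLp (hA.eigenvectorBasis i) ⬝ᵥ y) := by
    rw [dotProduct_mulVec, ← mulVec_transpose, hsym, he, smul_dotProduct, smul_eq_mul]
  have hne : WithLp.ofLp (hA.eigenvectorBasis i) ≠ 0 := by
    intro h0
    have := hA.eigenvectorBasis.orthonormal.ne_zero i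
    apply this
    ext j
    exact congrFun h0 j
  rw [h2, mul_pow]
  rcases h _ _ hne he with h3 | h3
  · refine mul_le_mul_of_nonneg_right ?_ (sq_nonneg _)
    exact sq_le_sq.mpr (h3.trans (le_abs_self _))
  · simp [h3]

open Matrix in
theorem const_of_eig_aux {V : Type*} [Fintype V] [DecidableEq V] (G : SimpleGraph V)
    [DecidableRel G.Adj] (hconn : G.Connected) (d : ℕ) (hreg : G.IsRegularOfDegree d)
    (v : V → ℝ) (h : G.adjMatrix ℝ *ᵥ v = (d : ℝ) • v) : ∀ i j, v i = v j := by
  have h0 : G.lapMatrix ℝ *ᵥ v = 0 := by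
    rw [SimpleGraph.lapMatrix, sub_mulVec, h]
    ext i
    simp [SimpleGraph.degMatrix, mulVec_diagonal, hreg i]
  intro i j
  exact (G.lapMatrix_mulVec_eq_zero_iff_forall_reachable).1 h0 i j (hconn.preconnected i j)

open Matrix in
theorem norm_bound_aux {V : Type*} [Fintype V] [DecidableEq V]
    (G : SimpleGraph V) [DecidableRel G.Adj] (hconn : G.Connected)
    (d : ℕ) (hd : d ≠ 0) (hreg : G.IsRegularOfDegree d)
    (hbip : ∃ c : V → Bool, ∀ u v : V, G.Adj u v → c u ≠ c v)
    (lam : ℝ) 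
    (heig : ∀ μ : ℝ, (∃ x : V → ℝ, x ≠ 0 ∧ (G.adjMatrix ℝ).mulVec x = μ • x) →
      |μ| ≠ (d : ℝ) → |μ| ≤ lam) (S : Finset V) (x : V → ℝ)
    (hx : x = fun v => if v ∈ S then 1 else 0) :
    (G.adjMatrix ℝ *ᵥ x) ⬝ᵥ (G.adjMatrix ℝ *ᵥ x) ≤
      lam ^ 2 * S.card + 2 * d ^ 2 * (S.card : ℝ) ^ 2 / Fintype.card V := by
  obtain ⟨c, hc⟩ := hbip
  have hne : Nonempty V := hconn.nonempty
  have hn : (0 : ℝ) < Fintype.card V := by exact_mod_cast Fintype.card_pos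
  set n : ℝ := (Fintype.card V : ℝ) with hn_def
  set A := G.adjMatrix ℝ with hA_def
  have hsym : Aᵀ = A := G.transpose_adjMatrix
  have hH : A.IsHermitian := by
    rw [Matrix.IsHermitian, conjTranspose_eq_transpose_of_trivial]; exact hsym
  have hdr : (d : ℝ) ≠ 0 := by exact_mod_cast hd
  let o : V → ℝ := fun _ => 1
  let s : V → ℝ := fun v => if c v then 1 else -1
  have hss : ∀ v, s v * s v = 1 := by intro v; simp only [s]; split_ifs <;> norm_num
  have hadj : ∀ u v, G.Adj u v → s v = - s u := by
    intro u v huv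
    have := hc u v huv
    simp only [s]
    cases h1 : c u <;> cases h2 : c v <;> simp_all
  have swap : ∀ u w : V → ℝ, (A *ᵥ u) ⬝ᵥ w = u ⬝ᵥ (A *ᵥ w) := by
    intro u w
    rw [dotProduct_mulVec, ← mulVec_transpose, hsym]
  have hAo : A *ᵥ o = (d : ℝ) • o := by
    ext v
    simp [A, o, SimpleGraph.adjMatrix_mulVec_apply, hreg v]
  have hAsv : ∀ w : V → ℝ, A *ᵥ (fun v => s v * w v) = fun v => - (s v * (A *ᵥ w) v) := by
    intro w
    ext v
    simp only [A, SimpleGraph.adjMatrix_mulVec_apply]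
    rw [Finset.mul_sum, ← Finset.sum_neg_distrib]
    refine Finset.sum_congr rfl fun u hu => ?_
    rw [hadj v u (by simpa using hu)]
    ring
  have hAs : A *ᵥ s = (-(d : ℝ)) • s := by
    have := hAsv o
    rw [hAo] at this
    have h2 : (fun v => s v * o v) = s := by ext v; simp [o]
    rw [h2] at this
    rw [this]
    ext v
    simp [o, mul_comm]
  have hoo : o ⬝ᵥ o = n := by simp [o, dotProduct, n]
  have hsd : s ⬝ᵥ s = n := by simp [dotProduct, hss, n]
  have hso : s ⬝ᵥ o = 0 := by
    have := swap s o
    rw [hAs, hAo, smul_dotProduct, dotProduct_smul, smul_eq_mul, smul_eq_mul] at this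
    have h3 : (d : ℝ) * (s ⬝ᵥ o) = 0 := by linarith
    exact (mul_eq_zero.1 h3).resolve_left hdr
  have hos : o ⬝ᵥ s = 0 := by rw [dotProduct_comm, hso]
  set k : ℝ := (S.card : ℝ) with hk
  have hxx : x ⬝ᵥ x = k := by simp [hx, dotProduct, k]
  have hxo : x ⬝ᵥ o = k := by simp [hx, dotProduct, o, k]
  have hox : o ⬝ᵥ x = k := by rw [dotProduct_comm, hxo]
  set t : ℝ := s ⬝ᵥ x with ht
  have hxs : x ⬝ᵥ s = t := by rw [dotProduct_comm]
  have htk : t ^ 2 ≤ k ^ 2 := by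
    have h1 : |t| ≤ k := by
      have : t = ∑ v ∈ S, s v := by simp [ht, hx, dotProduct]
      rw [this]
      refine (Finset.abs_sum_le_sum_abs _ _).trans ?_
      have : ∀ v, |s v| = 1 := by intro v; simp only [s]; split_ifs <;> norm_num
      simp [this, k]
    exact sq_le_sq.mpr (h1.trans (le_abs_self _))
  let y : V → ℝ := x - (k / n) • o - (t / n) • s
  have hyo : y ⬝ᵥ o = 0 := by
    simp only [y, sub_dotProduct, smul_dotProduct, smul_eq_mul, hxo, hoo, hso]
    field_simp
    ring
  have hys : y ⬝ᵥ s = 0 := by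
    simp only [y, sub_dotProduct, smul_dotProduct, smul_eq_mul, hxs, hos, hsd]
    field_simp
    ring
  have hyy : y ⬝ᵥ y ≤ k := by
    have : y ⬝ᵥ y = k - k ^ 2 / n - t ^ 2 / n := by
      have h1 : y ⬝ᵥ y = y ⬝ᵥ x := by
        conv_lhs => rhs; simp only [y]
        simp only [dotProduct_sub, dotProduct_smul, hyo, hys]
        simp
      rw [h1]
      simp only [y, sub_dotProduct, smul_dotProduct, smul_eq_mul, hxx, hox, ← ht]
      ring
    rw [this]
    have : 0 ≤ k ^ 2 / n := by positivity
    have : 0 ≤ t ^ 2 / n := by positivity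
    linarith
  have hsb := spectral_bound_aux A hH lam y (by
    intro μ v hv hAv
    by_cases hμ : |μ| = d
    · right
      rcases (abs_eq (Nat.cast_nonneg d)).1 hμ with h1 | h1
      · have hcst := const_of_eig_aux G hconn d hreg v (by rw [← h1]; exact hAv)
        obtain ⟨i⟩ := hne
        have : v = v i • o := by ext j; simp [o, hcst j i]
        rw [this, smul_dotProduct, dotProduct_comm, hyo, smul_zero]
      · have hcst := const_of_eig_aux G hconn d hreg (fun j => s j * v j) (by
          have := hAsv v
          rw [hAv, h1] at this
          refine this.trans ?_
          ext j
          simp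
          ring)
        obtain ⟨i⟩ := hne
        have : v = (s i * v i) • s := by
          ext j
          have h2 := hcst i j
          simp only [Pi.smul_apply, smul_eq_mul, h2]
          linear_combination (-v j) * hss j
        rw [this, smul_dotProduct, dotProduct_comm, hys, smul_zero]
    · left
      exact heig μ ⟨v, hv, hAv⟩ hμ)
  have hxy : x = y + (k / n) • o + (t / n) • s := by
    simp only [y]; abel
  have hAx : A *ᵥ x = A *ᵥ y + (k / n * d) • o + (-(t / n * d)) • s := by
    conv_lhs => rw [hxy]
    rw [mulVec_add, mulVec_add, mulVec_smul, mulVec_smul, hAo, hAs, smul_smul, smul_smul]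
    simp
  have e1 : (A *ᵥ y) ⬝ᵥ o = 0 := by rw [swap, hAo, dotProduct_smul, hyo, smul_zero]
  have e2 : (A *ᵥ y) ⬝ᵥ s = 0 := by rw [swap, hAs, dotProduct_smul, hys, smul_zero]
  have e3 : o ⬝ᵥ (A *ᵥ y) = 0 := by rw [dotProduct_comm, e1]
  have e4 : s ⬝ᵥ (A *ᵥ y) = 0 := by rw [dotProduct_comm, e2]
  have hfin : (A *ᵥ x) ⬝ᵥ (A *ᵥ x) =
      (A *ᵥ y) ⬝ᵥ (A *ᵥ y) + d ^ 2 * k ^ 2 / n + d ^ 2 * t ^ 2 / n := by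
    rw [hAx]
    simp only [add_dotProduct, dotProduct_add, smul_dotProduct, dotProduct_smul, smul_eq_mul,
      e1, e2, e3, e4, hoo, hsd, hso, hos]
    field_simp
    ring
  rw [hfin]
  have q1 : lam ^ 2 * (y ⬝ᵥ y) ≤ lam ^ 2 * k := by gcongr
  have q2 : (d : ℝ) ^ 2 * t ^ 2 / n ≤ d ^ 2 * k ^ 2 / n := by gcongr
  have q3 : 2 * (d : ℝ) ^ 2 * k ^ 2 / n = d ^ 2 * k ^ 2 / n + d ^ 2 * k ^ 2 / n := by ring
  linarith

open Matrix in
theorem boundary_bound_aux {V : Type*} [Fintype V] [DecidableEq V]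
    (γ : ℝ)
    (G : SimpleGraph V) [DecidableRel G.Adj] (hconn : G.Connected)
    (d : ℕ) (hreg : G.IsRegularOfDegree d)
    (hbip : ∃ c : V → Bool, ∀ u v : V, G.Adj u v → c u ≠ c v)
    (lam : ℝ) (hlam : 0 < lam)
    (heig : ∀ μ : ℝ, (∃ x : V → ℝ, x ≠ 0 ∧ (G.adjMatrix ℝ).mulVec x = μ • x) →
      |μ| ≠ (d : ℝ) → |μ| ≤ lam) (S : Set V) (hS : S.Nonempty)
    (hcard : (S.ncard : ℝ) ≤ (Fintype.card V : ℝ) ^ (1 - γ)) :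
      ((d : ℝ) ^ 2 / (lam ^ 2 + 2 * (d : ℝ) ^ 2 * (Fintype.card V : ℝ) ^ (-γ)) - 1) *
          (S.ncard : ℝ) ≤ ((vertexBoundary G S).ncard : ℝ) := by
  classical
  by_cases hd : d = 0
  · subst hd
    have h1 : (0 : ℝ) ≤ S.ncard := by positivity
    have h2 : (0 : ℝ) ≤ (vertexBoundary G S).ncard := by positivity
    simp
    linarith
  have hne : Nonempty V := hconn.nonempty
  have hn : (0 : ℝ) < Fintype.card V := by exact_mod_cast Fintype.card_pos
  have hk : (0 : ℝ) < S.ncard := by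
    exact_mod_cast (Set.ncard_pos (Set.toFinite S)).2 hS
  have hkF : S.ncard = S.toFinset.card := Set.ncard_eq_toFinset_card' S
  obtain ⟨x, hx⟩ : ∃ x : V → ℝ, x = fun v => if v ∈ S.toFinset then 1 else 0 := ⟨_, rfl⟩
  have hb := norm_bound_aux G hconn d hd hreg hbip lam heig S.toFinset x hx
  rw [← hkF] at hb
  set k : ℝ := (S.ncard : ℝ) with hkdef
  set n : ℝ := (Fintype.card V : ℝ) with hndef
  set D : ℝ := lam ^ 2 + 2 * (d : ℝ) ^ 2 * n ^ (-γ) with hD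
  have hDpos : 0 < D := by positivity
  have hkn : k / n ≤ n ^ (-γ) := by
    rw [div_le_iff₀ hn]
    calc k ≤ n ^ (1 - γ) := hcard
      _ = n ^ (-γ) * n := by
        rw [← Real.rpow_add_one hn.ne']
        ring_nf
  have hbD : (G.adjMatrix ℝ *ᵥ x) ⬝ᵥ (G.adjMatrix ℝ *ᵥ x) ≤ D * k := by
    refine hb.trans ?_
    have : 2 * (d : ℝ) ^ 2 * k ^ 2 / n = 2 * (d : ℝ) ^ 2 * (k / n) * k := by ring
    rw [this, hD, add_mul]
    gcongr
  -- the neighborhood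
  let N : Finset V := Finset.univ.filter fun v => ∃ u ∈ S, G.Adj u v
  have hNz : ∀ v, v ∉ N → (G.adjMatrix ℝ *ᵥ x) v = 0 := by
    intro v hv
    rw [SimpleGraph.adjMatrix_mulVec_apply]
    refine Finset.sum_eq_zero fun u hu => ?_
    have hu' : G.Adj v u := by simpa using hu
    have : u ∉ S := fun huS => hv (by simp only [N, Finset.mem_filter, Finset.mem_univ, true_and]; exact ⟨u, huS, hu'.symm⟩)
    simp [hx, this]
  have hsum : ∑ v ∈ N, (G.adjMatrix ℝ *ᵥ x) v = d * k := by
    have h1 : ∑ v ∈ N, (G.adjMatrix ℝ *ᵥ x) v = ∑ v, (G.adjMatrix ℝ *ᵥ x) v :=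
      Finset.sum_subset (Finset.subset_univ _) fun v _ hv => hNz v hv
    have h2 : ∑ v, (G.adjMatrix ℝ *ᵥ x) v = (fun _ => (1:ℝ)) ⬝ᵥ (G.adjMatrix ℝ *ᵥ x) := by
      simp [dotProduct]
    have h3 : G.adjMatrix ℝ *ᵥ (fun _ => (1:ℝ)) = fun _ => (d : ℝ) := by
      ext v
      simp [SimpleGraph.adjMatrix_mulVec_apply, hreg v]
    rw [h1, h2, dotProduct_mulVec, ← mulVec_transpose, SimpleGraph.transpose_adjMatrix, h3]
    simp [dotProduct, hx, hkdef, hkF, Finset.sum_ite, mul_comm]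
  have hcs : (d * k) ^ 2 ≤ N.card * (D * k) := by
    rw [← hsum]
    refine sq_sum_le_card_mul_sum_sq.trans ?_
    gcongr
    refine le_trans ?_ hbD
    simp only [dotProduct, ← pow_two]
    exact Finset.sum_le_sum_of_subset_of_nonneg (Finset.subset_univ _) fun _ _ _ => sq_nonneg _
  have hNc : (N.card : ℝ) ≤ k + (vertexBoundary G S).ncard := by
    have h1 : (N : Set V) ⊆ S ∪ vertexBoundary G S := by
      intro v hv
      have hv' : ∃ u ∈ S, G.Adj u v := by simpa [N] using hv
      by_cases hvS : v ∈ S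
      · exact Or.inl hvS
      · exact Or.inr ⟨hvS, hv'⟩
    have h2 := (Set.ncard_le_ncard h1 (Set.toFinite _)).trans (Set.ncard_union_le _ _)
    rw [Set.ncard_coe_finset] at h2
    rw [hkdef]
    exact_mod_cast h2
  have hfin : (d : ℝ) ^ 2 / D * k ≤ N.card := by
    rw [div_mul_eq_mul_div, div_le_iff₀ hDpos]
    have : (d ^ 2 * k) * k ≤ (N.card * D) * k := by linarith
    exact le_of_mul_le_mul_right this hk
  rw [sub_mul, one_mul]
  linarith

/-- Let `0 < γ < 1`, let `G` be a finite connected `d`-regular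
bipartite graph of order `n`, and let `λ > 0` be such that every eigenvalue `μ`
of the adjacency matrix of `G` with `|μ| ≠ d` satisfies `|μ| ≤ λ`.  Then every
nonempty `S ⊆ V(G)` with `|S| ≤ n^(1-γ)` satisfies
`|∂S| ≥ (d²/(λ² + 2d²·n^(-γ)) - 1)·|S|`; in particular
`h_γ(G) ≥ d²/(λ² + 2d²·n^(-γ)) - 1`. -/
theorem expansion_of_bipartite_spectral_gap [Fintype V] [DecidableEq V]
    (γ : ℝ) (hγ0 : 0 < γ) (hγ1 : γ < 1)
    (G : SimpleGraph V) [DecidableRel G.Adj] (hconn : G.Connected)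
    (d : ℕ) (hreg : G.IsRegularOfDegree d)
    (hbip : ∃ c : V → Bool, ∀ u v : V, G.Adj u v → c u ≠ c v)
    (lam : ℝ) (hlam : 0 < lam)
    (heig : ∀ μ : ℝ, (∃ x : V → ℝ, x ≠ 0 ∧ (G.adjMatrix ℝ).mulVec x = μ • x) →
      |μ| ≠ (d : ℝ) → |μ| ≤ lam) :
    (∀ S : Set V, S.Nonempty → (S.ncard : ℝ) ≤ (Fintype.card V : ℝ) ^ (1 - γ) →
      ((d : ℝ) ^ 2 / (lam ^ 2 + 2 * (d : ℝ) ^ 2 * (Fintype.card V : ℝ) ^ (-γ)) - 1) *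
          (S.ncard : ℝ) ≤ ((vertexBoundary G S).ncard : ℝ)) ∧
    (d : ℝ) ^ 2 / (lam ^ 2 + 2 * (d : ℝ) ^ 2 * (Fintype.card V : ℝ) ^ (-γ)) - 1 ≤
      hGamma G γ := by
  have hmain := fun S hS hc => boundary_bound_aux γ G hconn d hreg hbip lam hlam heig S hS hc
  refine ⟨hmain, ?_⟩
  unfold hGamma
  refine le_csInf ?_ ?_
  · obtain ⟨v⟩ := hconn.nonempty
    refine ⟨_, {v}, Set.singleton_nonempty v, ?_, rfl⟩
    rw [Set.ncard_singleton, Nat.cast_one]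
    refine Real.one_le_rpow ?_ (by linarith)
    exact_mod_cast Fintype.card_pos_iff.2 ⟨v⟩
  · rintro _ ⟨S, hS, hc, rfl⟩
    have hk : (0 : ℝ) < S.ncard := by
      exact_mod_cast (Set.ncard_pos (Set.toFinite S)).2 hS
    rw [le_div_iff₀ hk]
    exact hmain S hS hc
end
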